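/- arXiv:1210.1853 — 2 statements merged into one kernel-verified Lean document; each statement's English description precedes it below -/
import Mathlib

section
/- Ultraspherical logarithmic Sobolev inequality: let d ≥ 1. For every continuously differentiable function f on [−1,1] that is not identically zero, ∫_{−1}^{1} |f'(x)|² ν(x) dν_d(x) ≥ (d/2) ∫_{−1}^{1} |f|² log( |f|² / ‖f‖_2² ) dν_d, where ‖f‖_2² = ∫_{−1}^{1} |f|² dν_d. -/
open MeasureTheory Real

noncomputable section

/-- The normalization constant `Z_d = √π Γ(d/2)/Γ((d+1)/2)`. -/
def Zd (d : ℕ) : ℝ := Real.sqrt π * Real.Gamma ((d : ℝ) / 2) / Real.Gamma (((d : ℝ) + 1) / 2)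

/-- The probability measure `dν_d(x) = Z_d⁻¹ (1 − x²)^{d/2−1} dx` on `(−1,1)`. -/
def nuMeas (d : ℕ) : Measure ℝ :=
  (volume.restrict (Set.Ioo (-1 : ℝ) 1)).withDensity
    fun x => ENNReal.ofReal ((1 - x ^ 2) ^ ((d : ℝ) / 2 - 1) / Zd d)

/-!
Work with a real dimension `α` and let polynomials `u` evolve by the heat equation `∂ₜu = L u` of
the ultraspherical operator `L`; the flow is explicit because `L` is triangular on monomials, with
distinct diagonal entries, hence diagonalizable on `ℝ[X]`. A minimum principle keeps `u` positive.
The entropy `∫ u log u` has derivative `-J`, where `J` is the Fisher information, and after an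
integration by parts `J' + 2αJ` is minus the integral of a quadratic form, which is nonnegative for
`α ≥ 1/4`. Hence `2α ∫ u log u - J` is nondecreasing; since `u` tends to the constant `∫ u` as
`t → ∞`, its value at `t = 0` gives `2α Ent(u) ≤ J(u)`. For `u = P² + ε` the right-hand side is at
most `4 ∫ (1 - x²) P'²`, and the polynomials `P` are dense in `C¹`.
-/

open Set Filter Topology Polynomial

section CompactSupport

variable {X E F : Type*} [TopologicalSpace X] [T2Space X] [MeasurableSpace X]
  [OpensMeasurableSpace X] {μ : Measure X} [IsFiniteMeasure μ] {K : Set X}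
  [NormedAddCommGroup F]

lemma integrable_of_continuousOn_isCompact (hK : IsCompact K) (hμ : ∀ᵐ x ∂μ, x ∈ K) {g : X → F}
    (hg : ContinuousOn g K) : Integrable g μ := by
  have hgK := hg.integrableOn_compact (μ := μ) hK
  rwa [IntegrableOn, Measure.restrict_eq_self_of_ae_mem hμ] at hgK

variable [NormedSpace ℝ F]

lemma continuousOn_integral_of_isCompact {Y : Type*} [TopologicalSpace Y]
    [FirstCountableTopology Y] (hK : IsCompact K) (hμ : ∀ᵐ x ∂μ, x ∈ K) {S : Set Y}
    (hS : IsCompact S) {g : Y → X → F} (hg : ContinuousOn (Function.uncurry g) (S ×ˢ K)) :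
    ContinuousOn (fun t ↦ ∫ x, g t x ∂μ) S := by
  obtain ⟨B, hB⟩ := (hS.prod hK).exists_bound_of_continuousOn hg
  refine continuousOn_of_dominated (bound := fun _ ↦ B) (fun t ht ↦ ?_) (fun t ht ↦ ?_)
    (integrable_const B) ?_
  · exact (integrable_of_continuousOn_isCompact hK hμ
      (hg.uncurry_left t ht)).aestronglyMeasurable
  · filter_upwards [hμ] with x hx using hB (t, x) ⟨ht, hx⟩
  · filter_upwards [hμ] with x hx using hg.uncurry_right x hx

lemma hasDerivAt_integral_of_isCompact (hK : IsCompact K) (hμ : ∀ᵐ x ∂μ, x ∈ K) {S : Set ℝ}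
    (hS : IsCompact S) {t : ℝ} (ht : S ∈ 𝓝 t) {g g' : ℝ → X → F}
    (hg : ContinuousOn (Function.uncurry g) (S ×ˢ K))
    (hg' : ContinuousOn (Function.uncurry g') (S ×ˢ K))
    (hderiv : ∀ s ∈ S, ∀ x ∈ K, HasDerivAt (fun r ↦ g r x) (g' s x) s) :
    HasDerivAt (fun s ↦ ∫ x, g s x ∂μ) (∫ x, g' t x ∂μ) t := by
  obtain ⟨B, hB⟩ := (hS.prod hK).exists_bound_of_continuousOn hg'
  have slice_integrable {h : ℝ → X → F} (hh : ContinuousOn (Function.uncurry h) (S ×ˢ K))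
      {s : ℝ} (hs : s ∈ S) : Integrable (h s) μ :=
    integrable_of_continuousOn_isCompact hK hμ (hh.uncurry_left s hs)
  refine (hasDerivAt_integral_of_dominated_loc_of_deriv_le (bound := fun _ ↦ B) ht ?_
    (slice_integrable hg (mem_of_mem_nhds ht))
    (slice_integrable hg' (mem_of_mem_nhds ht)).aestronglyMeasurable ?_ (integrable_const B) ?_).2
  · filter_upwards [ht] with s hs using (slice_integrable hg hs).aestronglyMeasurable
  · filter_upwards [hμ] with x hx s hs using hB (s, x) ⟨hs, hx⟩
  · filter_upwards [hμ] with x hx s hs using hderiv s hs x hx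

lemma tendsto_integral_comp_of_isCompact [TopologicalSpace E] [T2Space E] {ι : Type*}
    {l : Filter ι} [l.IsCountablyGenerated] (hK : IsCompact K) (hμ : ∀ᵐ x ∂μ, x ∈ K) {B : Set E}
    (hB : IsCompact B) {φ : X → E → F}
    (hφ : ContinuousOn (Function.uncurry φ) (K ×ˢ B)) {u : ι → X → E} {v : X → E}
    (hu : ∀ᶠ i in l, ContinuousOn (u i) K) (huB : ∀ᶠ i in l, MapsTo (u i) K B)
    (huv : ∀ x ∈ K, Tendsto (fun i ↦ u i x) l (𝓝 (v x))) :
    Tendsto (fun i ↦ ∫ x, φ x (u i x) ∂μ) l (𝓝 (∫ x, φ x (v x) ∂μ)) := by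
  obtain ⟨M, hM⟩ := (hK.prod hB).exists_bound_of_continuousOn hφ
  refine tendsto_integral_filter_of_dominated_convergence (fun _ ↦ M) ?_ ?_ (integrable_const M) ?_
  · filter_upwards [hu, huB] with i hi hiB
    exact (integrable_of_continuousOn_isCompact hK hμ
      (hφ.comp (continuousOn_id.prodMk hi) fun x hx ↦ ⟨hx, hiB hx⟩)).aestronglyMeasurable
  · filter_upwards [huB] with i hiB
    filter_upwards [hμ] with x hx using hM (x, u i x) ⟨hx, hiB hx⟩
  · filter_upwards [hμ] with x hx
    rcases l.eq_or_neBot with rfl | hl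
    · exact tendsto_bot
    have hmem : ∀ᶠ i in l, u i x ∈ B := huB.mono fun i hi ↦ hi hx
    exact (hφ.uncurry_left x hx _ (hB.isClosed.mem_of_tendsto (huv x hx) hmem)).tendsto.comp
      (tendsto_nhdsWithin_iff.2 ⟨huv x hx, hmem⟩)

lemma tendsto_integral_comp_of_tendstoUniformlyOn [NormedAddCommGroup E] [ProperSpace E]
    {ι : Type*} {l : Filter ι} [l.NeBot] [l.IsCountablyGenerated] (hK : IsCompact K)
    (hμ : ∀ᵐ x ∂μ, x ∈ K) {φ : X → E → F} (hφ : Continuous (Function.uncurry φ)) {u : ι → X → E}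
    {v : X → E} (hu : ∀ i, ContinuousOn (u i) K) (huv : TendstoUniformlyOn u v l K) :
    Tendsto (fun i ↦ ∫ x, φ x (u i x) ∂μ) l (𝓝 (∫ x, φ x (v x) ∂μ)) := by
  obtain ⟨M, hM⟩ := hK.exists_bound_of_continuousOn (huv.continuousOn (.of_forall hu))
  refine tendsto_integral_comp_of_isCompact hK hμ (isCompact_closedBall 0 (M + 1))
    hφ.continuousOn (.of_forall hu) ?_ fun x hx ↦ huv.tendsto_at hx
  filter_upwards [Metric.tendstoUniformlyOn_iff.1 huv 1 one_pos] with i hi x hx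
  rw [mem_closedBall_zero_iff]
  linarith [norm_le_norm_add_norm_sub (v x) (u i x), hM x hx, dist_eq_norm (v x) (u i x), hi x hx]

end CompactSupport

section UltrasphericalMeasure

/-- The total mass `Z_α = √π Γ(α/2)/Γ((α+1)/2)` of the weight `(1 - x²)^(α/2 - 1)` on `(-1, 1)`,
for a real dimension parameter `α`. -/
def ultrasphericalMass (α : ℝ) : ℝ := √π * Real.Gamma (α / 2) / Real.Gamma ((α + 1) / 2)

/-- The ultraspherical probability measure of real dimension `α > 0`; it is `nuMeas d` for
`α = d`. -/
def ultrasphericalMeasure (α : ℝ) : Measure ℝ :=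
  (volume.restrict (Ioo (-1 : ℝ) 1)).withDensity
    fun x ↦ ENNReal.ofReal ((1 - x ^ 2) ^ (α / 2 - 1) / ultrasphericalMass α)

variable {α : ℝ}

lemma one_sub_sq_nonneg_of_mem_Icc {x : ℝ} (hx : x ∈ Icc (-1 : ℝ) 1) : 0 ≤ 1 - x ^ 2 := by
  nlinarith [hx.1, hx.2]

lemma one_sub_sq_pos_of_mem_Ioo {x : ℝ} (hx : x ∈ Ioo (-1 : ℝ) 1) : 0 < 1 - x ^ 2 := by
  nlinarith [hx.1, hx.2]

lemma hasDerivAt_one_sub_sq (x : ℝ) : HasDerivAt (fun x : ℝ ↦ 1 - x ^ 2) (-(2 * x)) x := by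
  simpa using ((hasDerivAt_id x).pow 2).const_sub 1

lemma ultrasphericalMass_pos (hα : 0 < α) : 0 < ultrasphericalMass α := by
  have := Real.Gamma_pos_of_pos (half_pos hα)
  have := Real.Gamma_pos_of_pos (s := (α + 1) / 2) (by positivity)
  unfold ultrasphericalMass
  positivity

lemma ae_ultrasphericalMeasure_mem_Ioo : ∀ᵐ x ∂ultrasphericalMeasure α, x ∈ Ioo (-1 : ℝ) 1 :=
  (withDensity_absolutelyContinuous _ _).ae_le (ae_restrict_mem measurableSet_Ioo)

lemma ae_ultrasphericalMeasure_mem_Icc : ∀ᵐ x ∂ultrasphericalMeasure α, x ∈ Icc (-1 : ℝ) 1 :=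
  ae_ultrasphericalMeasure_mem_Ioo.mono fun _ hx ↦ Ioo_subset_Icc_self hx

lemma volume_restrict_absolutelyContinuous_ultrasphericalMeasure (hα : 0 < α) :
    volume.restrict (Icc (-1 : ℝ) 1) ≪ ultrasphericalMeasure α := by
  rw [← restrict_Ioo_eq_restrict_Icc]
  refine withDensity_absolutelyContinuous' (by fun_prop) ?_
  filter_upwards [ae_restrict_mem measurableSet_Ioo] with x hx
  have := one_sub_sq_pos_of_mem_Ioo hx
  have := ultrasphericalMass_pos hα
  exact (ENNReal.ofReal_pos.2 (by positivity)).ne'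

/-- This is Legendre's duplication formula. -/
lemma ultrasphericalMass_eq_beta (hα : 0 < α) :
    ultrasphericalMass α = 2 * 4 ^ (α / 2 - 1) * ProbabilityTheory.beta (α / 2) (α / 2) := by
  have dup := Real.Gamma_mul_Gamma_add_half (α / 2)
  have two_rpow_mul : (2 : ℝ) ^ (1 - 2 * (α / 2)) * (2 * 4 ^ (α / 2 - 1)) = 1 := by
    rw [show (4 : ℝ) = 2 ^ (2 : ℝ) by norm_num, ← Real.rpow_mul zero_le_two, ← mul_assoc,
      ← Real.rpow_add_one two_ne_zero, ← Real.rpow_add two_pos]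
    ring_nf
    exact Real.rpow_zero 2
  have hGamma_half := (Real.Gamma_pos_of_pos (s := α / 2 + 1 / 2) (by positivity)).ne'
  have hGamma_two := (Real.Gamma_pos_of_pos (s := 2 * (α / 2)) (by positivity)).ne'
  rw [ultrasphericalMass, ProbabilityTheory.beta, ← two_mul, add_div, div_eq_iff hGamma_half,
    mul_div_assoc', div_mul_eq_mul_div, eq_div_iff hGamma_two]
  linear_combination (-(2 * 4 ^ (α / 2 - 1) * Gamma (α / 2))) * dup
    - (√π * Gamma (α / 2) * Gamma (2 * (α / 2))) * two_rpow_mul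

lemma isProbabilityMeasure_ultrasphericalMeasure (hα : 0 < α) :
    IsProbabilityMeasure (ultrasphericalMeasure α) := by
  have image_Ioo : (fun t : ℝ ↦ 2 * t - 1) '' Ioo 0 1 = Ioo (-1) 1 := by
    norm_num [sub_eq_add_neg, image_affine_Ioo]
  have density (t : ℝ) (ht : t ∈ Ioo (0 : ℝ) 1) : ENNReal.ofReal |2| *
      ENNReal.ofReal ((1 - (2 * t - 1) ^ 2) ^ (α / 2 - 1) / ultrasphericalMass α) =
      ENNReal.ofReal (1 / ProbabilityTheory.beta (α / 2) (α / 2) * t ^ (α / 2 - 1) *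
        (1 - t) ^ (α / 2 - 1)) := by
    have ht₁ : 0 ≤ 1 - t := sub_nonneg.2 ht.2.le
    have beta_pos := ProbabilityTheory.beta_pos (half_pos hα) (half_pos hα)
    rw [← ENNReal.ofReal_mul (abs_nonneg 2), ultrasphericalMass_eq_beta hα,
      show 1 - (2 * t - 1) ^ 2 = 4 * (t * (1 - t)) by ring,
      Real.mul_rpow zero_le_four (mul_nonneg ht.1.le ht₁), Real.mul_rpow ht.1.le ht₁, abs_two]
    congr 1
    field_simp
  constructor
  rw [ultrasphericalMeasure, withDensity_apply _ MeasurableSet.univ, Measure.restrict_univ,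
    ← image_Ioo, lintegral_image_eq_lintegral_abs_deriv_mul (f' := fun _ ↦ 2) measurableSet_Ioo
      (fun t _ ↦ by simpa using (((hasDerivAt_id t).const_mul 2).sub_const 1).hasDerivWithinAt)
      (fun s _ t _ hst ↦ by simpa using hst), setLIntegral_congr_fun measurableSet_Ioo density,
    ← ProbabilityTheory.lintegral_betaPDF,
    ProbabilityTheory.lintegral_betaPDF_eq_one (half_pos hα) (half_pos hα)]

lemma integrable_ultrasphericalMeasure (hα : 0 < α) {g : ℝ → ℝ}
    (hg : ContinuousOn g (Icc (-1) 1)) : Integrable g (ultrasphericalMeasure α) :=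
  have := isProbabilityMeasure_ultrasphericalMeasure hα
  integrable_of_continuousOn_isCompact isCompact_Icc ae_ultrasphericalMeasure_mem_Icc hg

lemma toReal_ultrasphericalDensity_smul (hα : 0 < α) (g : ℝ → ℝ) {x : ℝ}
    (hx : x ∈ Ioo (-1 : ℝ) 1) :
    (ENNReal.ofReal ((1 - x ^ 2) ^ (α / 2 - 1) / ultrasphericalMass α)).toReal • g x =
      (1 - x ^ 2) ^ (α / 2 - 1) * g x / ultrasphericalMass α := by
  have := ultrasphericalMass_pos hα
  have := one_sub_sq_pos_of_mem_Ioo hx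
  rw [ENNReal.toReal_ofReal (by positivity), smul_eq_mul, div_mul_eq_mul_div]

lemma integral_ultrasphericalMeasure (hα : 0 < α) (g : ℝ → ℝ) :
    ∫ x, g x ∂ultrasphericalMeasure α =
      (∫ x in Ioo (-1 : ℝ) 1, (1 - x ^ 2) ^ (α / 2 - 1) * g x) / ultrasphericalMass α := by
  rw [ultrasphericalMeasure,
    integral_withDensity_eq_integral_toReal_smul (by fun_prop) (by simp), ← integral_div]
  exact setIntegral_congr_fun measurableSet_Ioo fun x ↦ toReal_ultrasphericalDensity_smul hα g

lemma integrableOn_ultrasphericalWeight_mul (hα : 0 < α) {g : ℝ → ℝ}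
    (hg : ContinuousOn g (Icc (-1) 1)) :
    IntegrableOn (fun x ↦ (1 - x ^ 2) ^ (α / 2 - 1) * g x) (Ioo (-1) 1) := by
  have h := (integrable_withDensity_iff_integrable_smul' (by fun_prop) (by simp)).1
    (integrable_ultrasphericalMeasure hα hg)
  refine (h.mul_const (ultrasphericalMass α)).congr ?_
  filter_upwards [ae_restrict_mem measurableSet_Ioo] with x hx
  rw [toReal_ultrasphericalDensity_smul hα g hx,
    div_mul_cancel₀ _ (ultrasphericalMass_pos hα).ne']

/-- Integrating `((1 - x²)^(α/2) G)'`, whose boundary values vanish. -/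
lemma integral_one_sub_sq_mul_deriv_sub (hα : 0 < α) {G G' : ℝ → ℝ}
    (hG : ∀ x ∈ Icc (-1 : ℝ) 1, HasDerivAt G (G' x) x) (hG' : ContinuousOn G' (Icc (-1) 1)) :
    ∫ x, ((1 - x ^ 2) * G' x - α * x * G x) ∂ultrasphericalMeasure α = 0 := by
  have hGc : ContinuousOn G (Icc (-1) 1) := fun x hx ↦ (hG x hx).continuousAt.continuousWithinAt
  have hderiv : ∀ x ∈ Ioo (-1 : ℝ) 1, HasDerivAt (fun x ↦ (1 - x ^ 2) ^ (α / 2) * G x)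
      ((1 - x ^ 2) ^ (α / 2 - 1) * ((1 - x ^ 2) * G' x - α * x * G x)) x := by
    intro x hx
    have hpos := one_sub_sq_pos_of_mem_Ioo hx
    refine (((hasDerivAt_one_sub_sq x).rpow_const (Or.inl hpos.ne')).mul
      (hG x (Ioo_subset_Icc_self hx))).congr_deriv ?_
    rw [show (1 - x ^ 2) ^ (α / 2) = (1 - x ^ 2) ^ (α / 2 - 1) * (1 - x ^ 2) by
      rw [← Real.rpow_add_one hpos.ne', sub_add_cancel]]
    ring
  have hcont : ContinuousOn (fun x : ℝ ↦ (1 - x ^ 2) ^ (α / 2) * G x) (Icc (-1) 1) :=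
    ((by fun_prop : ContinuousOn (fun x : ℝ ↦ 1 - x ^ 2) (Icc (-1) 1)).rpow_const
      fun _ _ ↦ Or.inr (by positivity)).mul hGc
  have hint := integrableOn_ultrasphericalWeight_mul hα
    (g := fun x ↦ (1 - x ^ 2) * G' x - α * x * G x) (by fun_prop)
  have ftc := intervalIntegral.integral_eq_sub_of_hasDerivAt_of_le (by norm_num) hcont hderiv
    ((intervalIntegrable_iff_integrableOn_Ioo_of_le (by norm_num)).2 hint)
  rw [intervalIntegral.integral_of_le (by norm_num), integral_Ioc_eq_integral_Ioo] at ftc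
  rw [integral_ultrasphericalMeasure hα, ftc]
  norm_num [Real.zero_rpow (half_pos hα).ne']

end UltrasphericalMeasure

section UltrasphericalOp

variable {α : ℝ}

/-- The ultraspherical operator `L p = (1 - X²) p'' - α X p'` on polynomials, the generator of the
heat flow that leaves `ultrasphericalMeasure α` invariant. -/
def ultrasphericalOp (α : ℝ) : ℝ[X] →ₗ[ℝ] ℝ[X] :=
  LinearMap.mulLeft ℝ (1 - X ^ 2) ∘ₗ derivative ∘ₗ derivative -
    LinearMap.mulLeft ℝ (C α * X) ∘ₗ derivative

lemma eval_ultrasphericalOp (p : ℝ[X]) (x : ℝ) : (ultrasphericalOp α p).eval x =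
    (1 - x ^ 2) * (derivative (derivative p)).eval x - α * x * (derivative p).eval x := by
  simp [ultrasphericalOp, mul_assoc]

lemma eval_derivative_ultrasphericalOp (p : ℝ[X]) (x : ℝ) :
    (derivative (ultrasphericalOp α p)).eval x =
      (1 - x ^ 2) * (derivative (derivative (derivative p))).eval x -
        (α + 2) * x * (derivative (derivative p)).eval x - α * (derivative p).eval x := by
  simp only [ultrasphericalOp, LinearMap.mulLeft_mul, LinearMap.sub_apply, LinearMap.coe_comp,
    Function.comp_apply, LinearMap.mulLeft_apply, derivative_sub, derivative_mul, derivative_one,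
    derivative_X_pow_succ, Nat.cast_one, map_add, map_one, pow_one, zero_sub, neg_mul, derivative_C,
    zero_mul, derivative_X, one_mul, zero_add, eval_sub, eval_add, eval_neg, eval_mul, eval_one,
    eval_X, eval_pow, eval_C]
  ring

lemma integral_ultrasphericalOp_mul (hα : 0 < α) (p : ℝ[X]) {g g' : ℝ → ℝ}
    (hg : ∀ x ∈ Icc (-1 : ℝ) 1, HasDerivAt g (g' x) x) (hg' : ContinuousOn g' (Icc (-1) 1)) :
    ∫ x, (ultrasphericalOp α p).eval x * g x ∂ultrasphericalMeasure α =
      -∫ x, (1 - x ^ 2) * ((derivative p).eval x * g' x) ∂ultrasphericalMeasure α := by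
  have hgc : ContinuousOn g (Icc (-1) 1) := fun x hx ↦ (hg x hx).continuousAt.continuousWithinAt
  have ibp := integral_one_sub_sq_mul_deriv_sub hα
    (G := fun x ↦ (derivative p).eval x * g x)
    (G' := fun x ↦ (derivative (derivative p)).eval x * g x + (derivative p).eval x * g' x)
    (fun x hx ↦ ((derivative p).hasDerivAt x).mul (hg x hx)) (by fun_prop)
  rw [← add_eq_zero_iff_eq_neg, ← integral_add, ← ibp]
  · refine integral_congr_ae (Eventually.of_forall fun x ↦ ?_)
    simp only [eval_ultrasphericalOp]
    ring
  · exact integrable_ultrasphericalMeasure hα (by fun_prop)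
  · exact integrable_ultrasphericalMeasure hα (by fun_prop)

lemma integral_ultrasphericalOp (hα : 0 < α) (p : ℝ[X]) :
    ∫ x, (ultrasphericalOp α p).eval x ∂ultrasphericalMeasure α = 0 := by
  simpa using integral_ultrasphericalOp_mul hα p (fun x _ ↦ hasDerivAt_const x 1)
    continuousOn_const

/-- The Fisher information `∫ (1 - x²) p'² / p` of a density `p` relative to the ultraspherical
measure, which is meant for `p` positive on `[-1, 1]`. -/
def fisherInformation (α : ℝ) (p : ℝ[X]) : ℝ :=
  ∫ x, (1 - x ^ 2) * ((derivative p).eval x ^ 2 / p.eval x) ∂ultrasphericalMeasure α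

/-- The entropy dissipation identity: testing `L p` against the first variation of the entropy
gives minus the Fisher information. -/
lemma integral_ultrasphericalOp_mul_log (hα : 0 < α) {p : ℝ[X]}
    (hp : ∀ x ∈ Icc (-1 : ℝ) 1, 0 < p.eval x) :
    ∫ x, (ultrasphericalOp α p).eval x * (log (p.eval x) + 1) ∂ultrasphericalMeasure α =
      -fisherInformation α p := by
  rw [integral_ultrasphericalOp_mul hα p
    (fun x hx ↦ ((p.hasDerivAt x).log (hp x hx).ne').add_const 1)
    ((derivative p).continuous.continuousOn.div p.continuous.continuousOn
      fun x hx ↦ (hp x hx).ne')]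
  simp only [fisherInformation, mul_div_assoc', sq]

/-- Up to a term in divergence form, the derivative of the Fisher information density along the
heat flow is `-2α` times that density minus a quadratic form in `u₂` and `u₁²/u`. The coefficient
`1 - 2b` of the cubic term of `v` is chosen so that, for `b = 1/(α + 2)`, the terms in `x u₁³`
cancel. -/
lemma fisherDensity_dissipation_eq {α b u u₁ u₂ u₃ v v' : ℝ} (hb : b * (α + 2) = 1) (hu : u ≠ 0)
    (hv : v = 2 * (u₁ * u₂ / u) - (1 - 2 * b) * (u₁ ^ 3 / u ^ 2))
    (hv' : v' = 2 * ((u₂ ^ 2 + u₁ * u₃) / u - u₁ ^ 2 * u₂ / u ^ 2) -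
      (1 - 2 * b) * (3 * u₁ ^ 2 * u₂ / u ^ 2 - 2 * u₁ ^ 4 / u ^ 3)) (x : ℝ) :
    (1 - x ^ 2) * (2 * (u₁ / u) * ((1 - x ^ 2) * u₃ - (α + 2) * x * u₂ - α * u₁) -
        (u₁ / u) ^ 2 * ((1 - x ^ 2) * u₂ - α * x * u₁)) =
      ((1 - x ^ 2) * (-(2 * x) * v + (1 - x ^ 2) * v') - α * x * ((1 - x ^ 2) * v)) -
      2 * α * ((1 - x ^ 2) * (u₁ ^ 2 / u)) - 2 * (1 - x ^ 2) ^ 2 / u *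
        (u₂ ^ 2 - (2 - 3 * b) * u₂ * (u₁ ^ 2 / u) + (1 - 2 * b) * (u₁ ^ 2 / u) ^ 2) := by
  subst hv hv'
  field_simp
  linear_combination (2 * u * x * u₁ ^ 3 * (1 - x ^ 2)) * hb

/-- The discriminant `9b² - 4b` is nonpositive exactly when `α ≥ 1/4`. -/
lemma fisher_quadraticForm_nonneg {b : ℝ} (hb₀ : 0 ≤ b) (hb : b ≤ 4 / 9) (y z : ℝ) :
    0 ≤ y ^ 2 - (2 - 3 * b) * y * z + (1 - 2 * b) * z ^ 2 := by
  have : 0 ≤ b * (4 - 9 * b) * z ^ 2 :=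
    mul_nonneg (mul_nonneg hb₀ (by linarith)) (sq_nonneg z)
  nlinarith [sq_nonneg (2 * y - (2 - 3 * b) * z)]

lemma hasDerivAt_fisherFlux {u u₁ u₂ : ℝ → ℝ} {u₃ x : ℝ} (hu : HasDerivAt u (u₁ x) x)
    (hu₁ : HasDerivAt u₁ (u₂ x) x) (hu₂ : HasDerivAt u₂ u₃ x) (hx : u x ≠ 0) (c : ℝ) :
    HasDerivAt (fun x ↦ 2 * (u₁ x * u₂ x / u x) - c * (u₁ x ^ 3 / u x ^ 2))
      (2 * ((u₂ x ^ 2 + u₁ x * u₃) / u x - u₁ x ^ 2 * u₂ x / u x ^ 2) -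
        c * (3 * u₁ x ^ 2 * u₂ x / u x ^ 2 - 2 * u₁ x ^ 4 / u x ^ 3)) x := by
  refine ((((hu₁.mul hu₂).div hu hx).const_mul 2).sub
    (((hu₁.pow 3).div (hu.pow 2) (pow_ne_zero 2 hx)).const_mul c)).congr_deriv ?_
  simp only [Pi.mul_apply, Pi.pow_apply]
  field_simp
  push_cast
  ring

lemma integral_fisher_dissipation_le (hα : 1 / 4 ≤ α) {p : ℝ[X]}
    (hp : ∀ x ∈ Icc (-1 : ℝ) 1, 0 < p.eval x) :
    ∫ x, (1 - x ^ 2) * (2 * ((derivative p).eval x / p.eval x) *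
        (derivative (ultrasphericalOp α p)).eval x -
        ((derivative p).eval x / p.eval x) ^ 2 * (ultrasphericalOp α p).eval x)
        ∂ultrasphericalMeasure α ≤
      -(2 * α * fisherInformation α p) := by
  have hα₀ : 0 < α := by linarith
  set b := 1 / (α + 2)
  have hb : b * (α + 2) = 1 := one_div_mul_cancel (by positivity)
  have hb_le : b ≤ 4 / 9 := by
    rw [div_le_div_iff₀ (by positivity) (by norm_num)]
    linarith
  have hne : ∀ x ∈ Icc (-1 : ℝ) 1, p.eval x ≠ 0 := fun x hx ↦ (hp x hx).ne'
  have hne_pow (n : ℕ) : ∀ x ∈ Icc (-1 : ℝ) 1, p.eval x ^ n ≠ 0 :=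
    fun x hx ↦ pow_ne_zero n (hne x hx)
  have flux_deriv (x : ℝ) (hx : x ∈ Icc (-1 : ℝ) 1) := (hasDerivAt_one_sub_sq x).mul
    (hasDerivAt_fisherFlux (p.hasDerivAt x) ((derivative p).hasDerivAt x)
      ((derivative (derivative p)).hasDerivAt x) (hne x hx) (1 - 2 * b))
  have integrable {g : ℝ → ℝ} (hg : ContinuousOn g (Icc (-1) 1)) :=
    integrable_ultrasphericalMeasure hα₀ hg
  rw [fisherInformation, ← integral_const_mul, ← zero_sub,
    ← integral_one_sub_sq_mul_deriv_sub hα₀ flux_deriv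
      (by fun_prop (disch := first | exact hne | exact hne_pow _)),
    ← integral_sub (integrable (by fun_prop (disch := first | exact hne | exact hne_pow _)))
      (integrable (by fun_prop (disch := exact hne)))]
  refine integral_mono_ae (integrable (by fun_prop (disch := exact hne)))
    (integrable (by fun_prop (disch := first | exact hne | exact hne_pow _))) ?_
  filter_upwards [ae_ultrasphericalMeasure_mem_Icc] with x hx
  rw [eval_derivative_ultrasphericalOp, eval_ultrasphericalOp,
    fisherDensity_dissipation_eq hb (hne x hx) rfl rfl x]
  have form_nonneg := fisher_quadraticForm_nonneg (by positivity) hb_le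
    ((derivative (derivative p)).eval x) ((derivative p).eval x ^ 2 / p.eval x)
  have := hp x hx
  exact sub_le_self _ (by positivity)

end UltrasphericalOp

section Triangular

variable {K V : Type*} [Field K] [AddCommGroup V] [Module K V] {f : Module.End K V}

lemma exists_apply_sub_smul_eq_of_mem_iSup_eigenspace {ι : Type*} {s : Set ι} {a : K} {μ : ι → K}
    (hμ : ∀ k ∈ s, μ k ≠ a) {y : V} (hy : y ∈ ⨆ k ∈ s, f.eigenspace (μ k)) :
    ∃ z ∈ ⨆ k ∈ s, f.eigenspace (μ k), f z - a • z = y := by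
  suffices ⨆ k ∈ s, f.eigenspace (μ k) ≤
      (⨆ k ∈ s, f.eigenspace (μ k)).map (f - algebraMap K (Module.End K V) a) from
    Submodule.mem_map.1 (this hy)
  refine iSup₂_le fun k hk w hw ↦ ⟨(μ k - a)⁻¹ • w, ?_, ?_⟩
  · exact Submodule.smul_mem _ _ (Submodule.mem_iSup_of_mem k (Submodule.mem_iSup_of_mem hk hw))
  · rw [map_smul, LinearMap.sub_apply, Module.algebraMap_end_apply,
      Module.End.mem_eigenspace_iff.1 hw, ← sub_smul, inv_smul_smul₀ (sub_ne_zero.2 (hμ k hk))]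

/-- Solving `(f - μ n) z = (f - μ n) (e n)` among the earlier eigenvectors makes `e n - z` an
eigenvector. -/
lemma mem_iSup_eigenspace_of_triangular {e : ℕ → V} {μ : ℕ → K} (hμ : Function.Injective μ)
    (he : ∀ n, f (e n) - μ n • e n ∈ Submodule.span K (e '' Iio n)) (n : ℕ) :
    e n ∈ ⨆ k ∈ Iic n, f.eigenspace (μ k) := by
  have mono {s t : Set ℕ} (hst : s ⊆ t) :
      ⨆ k ∈ s, f.eigenspace (μ k) ≤ ⨆ k ∈ t, f.eigenspace (μ k) := biSup_mono hst
  induction n using Nat.strong_induction_on with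
  | _ n ih =>
    have span_le : Submodule.span K (e '' Iio n) ≤ ⨆ k ∈ Iio n, f.eigenspace (μ k) := by
      rw [Submodule.span_le, image_subset_iff]
      exact fun m hm ↦ mono (Iic_subset_Iio.2 hm) (ih m hm)
    obtain ⟨z, hz, hfz⟩ := exists_apply_sub_smul_eq_of_mem_iSup_eigenspace
      (fun k hk ↦ hμ.ne (ne_of_lt hk)) (span_le (he n))
    have eigenvector : e n - z ∈ f.eigenspace (μ n) := by
      rw [Module.End.mem_eigenspace_iff, map_sub, smul_sub, sub_eq_sub_iff_sub_eq_sub, hfz]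
    rw [← sub_add_cancel (e n) z]
    exact add_mem
      (Submodule.mem_iSup_of_mem n (Submodule.mem_iSup_of_mem self_mem_Iic eigenvector))
      (mono Iio_subset_Iic_self hz)

lemma iSup_eigenspace_eq_top_of_triangular {e : ℕ → V} {μ : ℕ → K} (hμ : Function.Injective μ)
    (he : ∀ n, f (e n) - μ n • e n ∈ Submodule.span K (e '' Iio n))
    (he_span : Submodule.span K (range e) = ⊤) : ⨆ k, f.eigenspace (μ k) = ⊤ := by
  rw [eq_top_iff, ← he_span, Submodule.span_le, range_subset_iff]
  have biSup_le (n : ℕ) : ⨆ k ∈ Iic n, f.eigenspace (μ k) ≤ ⨆ k, f.eigenspace (μ k) :=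
    iSup_mono fun k ↦ iSup_le fun _ ↦ le_rfl
  exact fun n ↦ biSup_le n (mem_iSup_eigenspace_of_triangular hμ he n)

end Triangular

section Spectrum

variable {α : ℝ}

/-- The eigenvalues of `-ultrasphericalOp α`; the eigenfunctions are the ultraspherical
polynomials. -/
def ultrasphericalEigenvalue (α : ℝ) (n : ℕ) : ℝ := n * (n + α - 1)

@[simp]
lemma ultrasphericalEigenvalue_zero : ultrasphericalEigenvalue α 0 = 0 := by
  simp [ultrasphericalEigenvalue]

lemma strictMono_ultrasphericalEigenvalue (hα : 0 < α) :
    StrictMono (ultrasphericalEigenvalue α) := by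
  refine strictMono_nat_of_lt_succ fun n ↦ ?_
  unfold ultrasphericalEigenvalue
  push_cast
  nlinarith [Nat.cast_nonneg (α := ℝ) n]

lemma ultrasphericalEigenvalue_pos (hα : 0 < α) {n : ℕ} (hn : n ≠ 0) :
    0 < ultrasphericalEigenvalue α n := by
  simpa using strictMono_ultrasphericalEigenvalue hα (Nat.pos_of_ne_zero hn)

lemma coeff_ultrasphericalOp (p : ℝ[X]) (n : ℕ) : (ultrasphericalOp α p).coeff n =
    (n + 2) * (n + 1) * p.coeff (n + 2) - ultrasphericalEigenvalue α n * p.coeff n := by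
  simp only [ultrasphericalOp, LinearMap.mulLeft_mul, LinearMap.sub_apply, LinearMap.coe_comp,
    Function.comp_apply, LinearMap.mulLeft_apply, sub_mul, one_mul, coeff_sub, coeff_derivative]
  rcases n with _ | _ | n
  · norm_num [mul_comm]
  · simp only [mul_assoc, coeff_X_pow_mul', coeff_C_mul, coeff_X_mul, coeff_derivative,
      Nat.not_ofNat_le_one, zero_add, reduceIte, ultrasphericalEigenvalue]
    push_cast
    ring
  · simp only [mul_assoc, coeff_X_pow_mul', coeff_C_mul, coeff_X_mul, coeff_derivative,
      le_add_iff_nonneg_left, zero_le, reduceIte, Nat.reduceSubDiff, ultrasphericalEigenvalue]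
    push_cast
    ring

lemma ultrasphericalOp_X_pow (n : ℕ) : ultrasphericalOp α (X ^ n) -
    (-ultrasphericalEigenvalue α n) • X ^ n = (n * (n - 1) : ℝ) • X ^ (n - 2) := by
  refine Polynomial.funext fun x ↦ ?_
  rw [eval_sub, eval_ultrasphericalOp]
  rcases n with _ | _ | n
  · simp
  · simp [ultrasphericalEigenvalue]
  · simp only [derivative_X_pow_succ, derivative_C_mul, eval_mul, eval_C, eval_pow, eval_X,
      eval_smul, smul_eq_mul, ultrasphericalEigenvalue]
    push_cast
    ring

lemma iSup_eigenspace_ultrasphericalOp (hα : 0 < α) :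
    ⨆ k, Module.End.eigenspace (ultrasphericalOp α) (-ultrasphericalEigenvalue α k) = ⊤ := by
  refine iSup_eigenspace_eq_top_of_triangular (e := fun n ↦ X ^ n)
    (neg_injective.comp (strictMono_ultrasphericalEigenvalue hα).injective) (fun n ↦ ?_) ?_
  · rw [ultrasphericalOp_X_pow]
    rcases n with _ | _ | n
    · simp
    · simp
    · exact Submodule.smul_mem _ _ (Submodule.subset_span ⟨n, by simp, by simp⟩)
  · simpa [coe_basisMonomials, monomial_one_right_eq_X_pow] using (basisMonomials ℝ).span_eq

lemma natDegree_eq_zero_of_ultrasphericalOp_eq_zero (hα : 0 < α) {p : ℝ[X]}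
    (hp : ultrasphericalOp α p = 0) : p.natDegree = 0 := by
  by_contra hn
  have top_coeff := coeff_ultrasphericalOp (α := α) p p.natDegree
  rw [hp, coeff_zero, coeff_eq_zero_of_natDegree_lt (by lia), mul_zero, zero_sub, zero_eq_neg]
    at top_coeff
  have := (mul_eq_zero_iff_left (ultrasphericalEigenvalue_pos hα hn).ne').1 top_coeff
  simp_all

end Spectrum

section MinimumPrinciple

lemma sub_mul_nonneg_of_isMinOn {f : ℝ → ℝ} {f' x y : ℝ} {s : Set ℝ} (hs : Convex ℝ s)
    (hmin : IsMinOn f s x) (hf : HasDerivAt f f' x) (hx : x ∈ s) (hy : y ∈ s) :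
    0 ≤ (y - x) * f' := by
  have segment_subset : segment ℝ x (x + (y - x)) ⊆ s := by
    rw [add_sub_cancel]
    exact hs.segment_subset hx hy
  simpa using hmin.localize.hasFDerivWithinAt_nonneg hf.hasFDerivAt.hasFDerivWithinAt
    (mem_posTangentConeAt_of_segment_subset segment_subset)

lemma deriv_deriv_nonneg_of_isLocalMin {f : ℝ → ℝ} {x : ℝ} (hmin : IsLocalMin f x)
    (hf : ContinuousAt f x) : 0 ≤ deriv (deriv f) x := by
  by_contra! hneg
  have hmax : IsLocalMax f x := isLocalMax_of_deriv_deriv_neg hneg hmin.deriv_eq_zero hf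
  have eventually_const : f =ᶠ[𝓝 x] fun _ ↦ f x := by
    filter_upwards [hmax, hmin] with y hle hge using le_antisymm hle hge
  have : deriv (deriv f) x = 0 := by simpa using eventually_const.deriv.deriv_eq
  exact hneg.ne this

variable {α : ℝ}

lemma eval_ultrasphericalOp_nonneg_of_isMinOn (hα : 0 ≤ α) {p : ℝ[X]} {x : ℝ}
    (hx : x ∈ Icc (-1 : ℝ) 1) (hmin : IsMinOn (fun y ↦ p.eval y) (Icc (-1) 1) x) :
    0 ≤ (ultrasphericalOp α p).eval x := by
  have first_order {y : ℝ} (hy : y ∈ Icc (-1 : ℝ) 1) : 0 ≤ (y - x) * (derivative p).eval x :=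
    sub_mul_nonneg_of_isMinOn (convex_Icc _ _) hmin (p.hasDerivAt x) hx hy
  have second_order : 0 ≤ (1 - x ^ 2) * (derivative (derivative p)).eval x := by
    by_cases hint : x ∈ Ioo (-1 : ℝ) 1
    · have := deriv_deriv_nonneg_of_isLocalMin
        (hmin.isLocalMin (Icc_mem_nhds hint.1 hint.2)) p.continuousAt
      rw [show deriv (fun y ↦ p.eval y) = fun y ↦ (derivative p).eval y from
        funext fun y ↦ p.deriv, Polynomial.deriv] at this
      exact mul_nonneg (one_sub_sq_nonneg_of_mem_Icc hx) this
    · have hx_end : x = -1 ∨ x = 1 := by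
        by_contra! hne
        exact hint ⟨hx.1.lt_of_ne' hne.1, hx.2.lt_of_ne hne.2⟩
      rw [sq_eq_one_iff.2 hx_end.symm, sub_self, zero_mul]
  have drift : 0 ≤ -(x * (derivative p).eval x) := by
    simpa using first_order (y := 0) (by norm_num)
  rw [eval_ultrasphericalOp]
  nlinarith [mul_nonneg hα drift]

/-- If `u + δ t` had its minimum at a time `t > 0`, then there `∂ₜu ≤ -δ < 0`, whereas `L u ≥ 0`. -/
lemma le_eval_of_heatEquation (hα : 0 ≤ α) {U : ℝ → ℝ[X]}
    (hcont : Continuous fun z : ℝ × ℝ ↦ (U z.1).eval z.2)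
    (hU : ∀ t x, HasDerivAt (fun s ↦ (U s).eval x) ((ultrasphericalOp α (U t)).eval x) t) {ε : ℝ}
    (h₀ : ∀ x ∈ Icc (-1 : ℝ) 1, ε ≤ (U 0).eval x) {t x : ℝ} (ht : 0 ≤ t)
    (hx : x ∈ Icc (-1 : ℝ) 1) : ε ≤ (U t).eval x := by
  suffices ∀ δ > 0, ε ≤ (U t).eval x + δ * t by
    have limit : Tendsto (fun δ ↦ (U t).eval x + δ * t) (𝓝[>] 0) (𝓝 ((U t).eval x)) :=
      tendsto_nhdsWithin_of_tendsto_nhds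
        (Continuous.tendsto' (by fun_prop) 0 _ (by simp))
    exact ge_of_tendsto limit (eventually_mem_nhdsWithin.mono this)
  intro δ hδ
  obtain ⟨⟨s, y⟩, ⟨hs, hy⟩, hmin⟩ := (isCompact_Icc.prod isCompact_Icc).exists_isMinOn
    (nonempty_of_mem (mk_mem_prod (right_mem_Icc.2 ht) hx))
    (f := fun z : ℝ × ℝ ↦ (U z.1).eval z.2 + δ * z.1) (by fun_prop)
  refine le_trans ?_ (hmin (mk_mem_prod (right_mem_Icc.2 ht) hx))
  rcases hs.1.eq_or_lt with rfl | hs_pos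
  · simpa using h₀ y hy
  have space_min : 0 ≤ (ultrasphericalOp α (U s)).eval y :=
    eval_ultrasphericalOp_nonneg_of_isMinOn hα hy fun z hz ↦ by
      simpa using hmin (mk_mem_prod hs hz)
  have time_min : 0 ≤ (0 - s) * ((ultrasphericalOp α (U s)).eval y + δ) :=
    sub_mul_nonneg_of_isMinOn (convex_Icc 0 t) (f := fun r ↦ (U r).eval y + δ * r)
      (fun r hr ↦ hmin (mk_mem_prod hr hy))
      ((hU s y).add (by simpa using (hasDerivAt_id s).const_mul δ)) hs (left_mem_Icc.2 ht)
  nlinarith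

end MinimumPrinciple

section HeatFlow

variable {α : ℝ} {q : ℕ →₀ ℝ[X]}

/-- The polynomial heat flow `∑ exp (-λₖ t) qₖ` started at `∑ qₖ`, where `qₖ` is meant to lie in the
eigenspace of `ultrasphericalOp α` with eigenvalue `-λₖ`. -/
def heatFlow (α : ℝ) (q : ℕ →₀ ℝ[X]) (t : ℝ) : ℝ[X] :=
  q.sum fun k p ↦ exp (-ultrasphericalEigenvalue α k * t) • p

lemma heatFlow_zero : heatFlow α q 0 = q.sum fun _ p ↦ p := by simp [heatFlow]

lemma map_heatFlow {M : Type*} [AddCommMonoid M] [Module ℝ M] (D : ℝ[X] →ₗ[ℝ] M) (t : ℝ) :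
    D (heatFlow α q t) =
      ∑ k ∈ q.support, exp (-ultrasphericalEigenvalue α k * t) • D (q k) := by
  simp only [heatFlow, Finsupp.sum, map_sum, map_smul]

lemma continuous_eval_map_heatFlow (D : ℝ[X] →ₗ[ℝ] ℝ[X]) :
    Continuous fun z : ℝ × ℝ ↦ (D (heatFlow α q z.1)).eval z.2 := by
  simp only [map_heatFlow, eval_finsetSum, eval_smul]
  fun_prop

lemma hasDerivAt_map_heatFlow
    (hq : ∀ k, q k ∈ Module.End.eigenspace (ultrasphericalOp α) (-ultrasphericalEigenvalue α k))
    (ℓ : ℝ[X] →ₗ[ℝ] ℝ) (t : ℝ) :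
    HasDerivAt (fun s ↦ ℓ (heatFlow α q s)) (ℓ (ultrasphericalOp α (heatFlow α q t))) t := by
  rw [← LinearMap.comp_apply, map_heatFlow]
  simp only [map_heatFlow]
  refine HasDerivAt.fun_sum fun k _ ↦ ?_
  refine (((hasDerivAt_id t).const_mul (-ultrasphericalEigenvalue α k)).exp.smul_const
    (ℓ (q k))).congr_deriv ?_
  simp only [LinearMap.comp_apply, Module.End.mem_eigenspace_iff.1 (hq k), map_smul, smul_smul,
    mul_one, id_eq]

lemma integral_eq_zero_of_mem_eigenspace (hα : 0 < α) {p : ℝ[X]} {a : ℝ} (ha : a ≠ 0)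
    (hp : p ∈ Module.End.eigenspace (ultrasphericalOp α) a) :
    ∫ x, p.eval x ∂ultrasphericalMeasure α = 0 := by
  have := integral_ultrasphericalOp hα p
  simpa [Module.End.mem_eigenspace_iff.1 hp, integral_const_mul, ha] using this

lemma integral_eq_of_mem_eigenspace_zero (hα : 0 < α) {p : ℝ[X]}
    (hp : p ∈ Module.End.eigenspace (ultrasphericalOp α) 0) (x : ℝ) :
    ∫ y, p.eval y ∂ultrasphericalMeasure α = p.eval x := by
  have := isProbabilityMeasure_ultrasphericalMeasure hα
  have hp_const := eq_C_of_natDegree_eq_zero (natDegree_eq_zero_of_ultrasphericalOp_eq_zero hα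
    (by simpa using Module.End.mem_eigenspace_iff.1 hp))
  rw [hp_const]
  simp

lemma integral_heatFlow (hα : 0 < α)
    (hq : ∀ k, q k ∈ Module.End.eigenspace (ultrasphericalOp α) (-ultrasphericalEigenvalue α k))
    (t x : ℝ) : ∫ y, (heatFlow α q t).eval y ∂ultrasphericalMeasure α = (q 0).eval x := by
  simp only [heatFlow, Finsupp.sum, eval_finsetSum, eval_smul, smul_eq_mul]
  rw [integral_finsetSum _ fun k _ ↦
    (integrable_ultrasphericalMeasure hα (q k).continuous.continuousOn).const_mul _]
  simp only [integral_const_mul]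
  rw [Finset.sum_eq_single 0]
  · rw [integral_eq_of_mem_eigenspace_zero hα (by simpa using hq 0) x]
    simp
  · intro k _ hk
    rw [integral_eq_zero_of_mem_eigenspace hα
      (neg_ne_zero.2 (ultrasphericalEigenvalue_pos hα hk).ne') (hq k), mul_zero]
  · intro h
    simp [Finsupp.notMem_support_iff.1 h]

lemma tendsto_eval_heatFlow_atTop (hα : 0 < α) (x : ℝ) :
    Tendsto (fun t ↦ (heatFlow α q t).eval x) atTop (𝓝 ((q 0).eval x)) := by
  have mode_tendsto (k : ℕ) : Tendsto (fun t ↦ exp (-ultrasphericalEigenvalue α k * t) *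
      (q k).eval x) atTop (𝓝 (if k = 0 then (q k).eval x else 0)) := by
    split_ifs with hk
    · simp [hk]
    · simpa using (tendsto_exp_atBot.comp (tendsto_id.const_mul_atTop_of_neg
        (neg_lt_zero.2 (ultrasphericalEigenvalue_pos hα hk)))).mul_const ((q k).eval x)
  simp only [heatFlow, Finsupp.sum, eval_finsetSum, eval_smul, smul_eq_mul]
  convert tendsto_finsetSum q.support fun k _ ↦ mode_tendsto k using 2
  rw [Finset.sum_ite_eq']
  split_ifs with h
  · rfl
  · simp [Finsupp.notMem_support_iff.1 h]

lemma le_eval_heatFlow (hα : 0 ≤ α)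
    (hq : ∀ k, q k ∈ Module.End.eigenspace (ultrasphericalOp α) (-ultrasphericalEigenvalue α k))
    {a : ℝ} (h₀ : ∀ x ∈ Icc (-1 : ℝ) 1, a ≤ (heatFlow α q 0).eval x) {t x : ℝ} (ht : 0 ≤ t)
    (hx : x ∈ Icc (-1 : ℝ) 1) : a ≤ (heatFlow α q t).eval x :=
  le_eval_of_heatEquation hα (continuous_eval_map_heatFlow LinearMap.id)
    (fun t x ↦ hasDerivAt_map_heatFlow hq (leval x) t) h₀ ht hx

lemma heatFlow_neg (t : ℝ) : heatFlow α (-q) t = -heatFlow α q t := by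
  simp [heatFlow, Finsupp.sum_neg_index, Finsupp.sum_neg]

lemma eval_heatFlow_le (hα : 0 ≤ α)
    (hq : ∀ k, q k ∈ Module.End.eigenspace (ultrasphericalOp α) (-ultrasphericalEigenvalue α k))
    {b : ℝ} (h₀ : ∀ x ∈ Icc (-1 : ℝ) 1, (heatFlow α q 0).eval x ≤ b) {t x : ℝ} (ht : 0 ≤ t)
    (hx : x ∈ Icc (-1 : ℝ) 1) : (heatFlow α q t).eval x ≤ b := by
  have := le_eval_heatFlow (q := -q) (a := -b) hα (fun k ↦ neg_mem (hq k))
    (fun x hx ↦ by simpa [heatFlow_neg] using h₀ x hx) ht hx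
  simpa [heatFlow_neg] using this

end HeatFlow

section Entropy

/-- The entropy `Ent_μ(u) = ∫ u log u - (∫ u) log (∫ u)` of a nonnegative function `u`, which is
homogeneous in `u`. -/
def functionalEntropy {X : Type*} [MeasurableSpace X] (μ : Measure X) (u : X → ℝ) : ℝ :=
  ∫ x, u x * log (u x) ∂μ - (∫ x, u x ∂μ) * log (∫ x, u x ∂μ)

lemma integral_mul_log_div_integral {X : Type*} [MeasurableSpace X] {μ : Measure X} {u : X → ℝ}
    (hu : Integrable u μ) (hlog : Integrable (fun x ↦ u x * log (u x)) μ)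
    (hu₀ : ∫ x, u x ∂μ ≠ 0) :
    ∫ x, u x * log (u x / ∫ y, u y ∂μ) ∂μ = functionalEntropy μ u := by
  rw [functionalEntropy, ← integral_mul_const, ← integral_sub hlog (hu.mul_const _)]
  refine integral_congr_ae (Eventually.of_forall fun x ↦ ?_)
  rcases eq_or_ne (u x) 0 with hx | hx
  · simp only [hx, zero_mul, sub_zero]
  · simp only [log_div hx hu₀, mul_sub]

lemma tendsto_functionalEntropy_comp {X E : Type*} [TopologicalSpace X] [T2Space X]
    [MeasurableSpace X] [OpensMeasurableSpace X] {μ : Measure X} [IsFiniteMeasure μ] {K : Set X}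
    [NormedAddCommGroup E] [ProperSpace E] {ι : Type*} {l : Filter ι} [l.NeBot]
    [l.IsCountablyGenerated] (hK : IsCompact K) (hμ : ∀ᵐ x ∂μ, x ∈ K) {φ : E → ℝ}
    (hφ : Continuous φ) {u : ι → X → E} {v : X → E} (hu : ∀ i, ContinuousOn (u i) K)
    (huv : TendstoUniformlyOn u v l K) :
    Tendsto (fun i ↦ functionalEntropy μ fun x ↦ φ (u i x)) l
      (𝓝 (functionalEntropy μ fun x ↦ φ (v x))) := by
  have tendsto_integral {ψ : E → ℝ} (hψ : Continuous ψ) :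
      Tendsto (fun i ↦ ∫ x, ψ (u i x) ∂μ) l (𝓝 (∫ x, ψ (v x) ∂μ)) :=
    tendsto_integral_comp_of_tendstoUniformlyOn hK hμ (φ := fun _ ↦ ψ) (hψ.comp continuous_snd)
      hu huv
  exact (tendsto_integral (continuous_mul_log.comp hφ)).sub
    ((continuous_mul_log.tendsto _).comp (tendsto_integral hφ))

end Entropy

section EntropyDissipation

variable {α t T : ℝ} {q : ℕ →₀ ℝ[X]}

lemma continuousOn_mul_log_heatFlow
    (hpos : ∀ s, 0 ≤ s → ∀ x ∈ Icc (-1 : ℝ) 1, 0 < (heatFlow α q s).eval x) :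
    ContinuousOn (Function.uncurry fun s x ↦
      (heatFlow α q s).eval x * log ((heatFlow α q s).eval x)) (Icc 0 T ×ˢ Icc (-1) 1) :=
  (continuous_eval_map_heatFlow LinearMap.id).continuousOn.mul
    ((continuous_eval_map_heatFlow LinearMap.id).continuousOn.log
      fun z hz ↦ (hpos z.1 hz.1.1 z.2 hz.2).ne')

lemma continuousOn_fisherDensity_heatFlow
    (hpos : ∀ s, 0 ≤ s → ∀ x ∈ Icc (-1 : ℝ) 1, 0 < (heatFlow α q s).eval x) :
    ContinuousOn (Function.uncurry fun s x ↦
      (1 - x ^ 2) * ((derivative (heatFlow α q s)).eval x ^ 2 / (heatFlow α q s).eval x))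
      (Icc 0 T ×ˢ Icc (-1) 1) :=
  (by fun_prop : Continuous fun z : ℝ × ℝ ↦ 1 - z.2 ^ 2).continuousOn.mul
    (((continuous_eval_map_heatFlow derivative).pow 2).continuousOn.div
      (continuous_eval_map_heatFlow LinearMap.id).continuousOn
      fun z hz ↦ (hpos z.1 hz.1.1 z.2 hz.2).ne')

lemma hasDerivAt_integral_mul_log_heatFlow (hα : 0 < α)
    (hq : ∀ k, q k ∈ Module.End.eigenspace (ultrasphericalOp α) (-ultrasphericalEigenvalue α k))
    (hpos : ∀ s, 0 ≤ s → ∀ x ∈ Icc (-1 : ℝ) 1, 0 < (heatFlow α q s).eval x) (ht : 0 < t) :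
    HasDerivAt (fun s ↦ ∫ x, (heatFlow α q s).eval x * log ((heatFlow α q s).eval x)
      ∂ultrasphericalMeasure α) (-fisherInformation α (heatFlow α q t)) t := by
  have := isProbabilityMeasure_ultrasphericalMeasure hα
  rw [← integral_ultrasphericalOp_mul_log hα (hpos t ht.le)]
  refine hasDerivAt_integral_of_isCompact isCompact_Icc ae_ultrasphericalMeasure_mem_Icc
    isCompact_Icc (Icc_mem_nhds ht (lt_add_one t)) (continuousOn_mul_log_heatFlow hpos)
    (g' := fun s x ↦ (ultrasphericalOp α (heatFlow α q s)).eval x *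
      (log ((heatFlow α q s).eval x) + 1)) ?_ fun s hs x hx ↦ ?_
  · exact (continuous_eval_map_heatFlow _).continuousOn.mul
      (((continuous_eval_map_heatFlow LinearMap.id).continuousOn.log
        fun z hz ↦ (hpos z.1 hz.1.1 z.2 hz.2).ne').add_const 1)
  · rw [mul_comm]
    exact (hasDerivAt_mul_log (hpos s hs.1 x hx).ne').comp s
      (hasDerivAt_map_heatFlow hq (leval x) s)

lemma hasDerivAt_fisherInformation_heatFlow (hα : 0 < α)
    (hq : ∀ k, q k ∈ Module.End.eigenspace (ultrasphericalOp α) (-ultrasphericalEigenvalue α k))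
    (hpos : ∀ s, 0 ≤ s → ∀ x ∈ Icc (-1 : ℝ) 1, 0 < (heatFlow α q s).eval x) (ht : 0 < t) :
    HasDerivAt (fun s ↦ fisherInformation α (heatFlow α q s))
      (∫ x, (1 - x ^ 2) * (2 * ((derivative (heatFlow α q t)).eval x / (heatFlow α q t).eval x) *
        (derivative (ultrasphericalOp α (heatFlow α q t))).eval x -
        ((derivative (heatFlow α q t)).eval x / (heatFlow α q t).eval x) ^ 2 *
          (ultrasphericalOp α (heatFlow α q t)).eval x) ∂ultrasphericalMeasure α) t := by
  have := isProbabilityMeasure_ultrasphericalMeasure hα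
  refine hasDerivAt_integral_of_isCompact isCompact_Icc ae_ultrasphericalMeasure_mem_Icc
    isCompact_Icc (Icc_mem_nhds ht (lt_add_one t)) (continuousOn_fisherDensity_heatFlow hpos)
    (g' := fun s x ↦ (1 - x ^ 2) *
      (2 * ((derivative (heatFlow α q s)).eval x / (heatFlow α q s).eval x) *
        (derivative (ultrasphericalOp α (heatFlow α q s))).eval x -
        ((derivative (heatFlow α q s)).eval x / (heatFlow α q s).eval x) ^ 2 *
          (ultrasphericalOp α (heatFlow α q s)).eval x)) ?_ fun s hs x hx ↦ ?_
  · have eval_cont (D : ℝ[X] →ₗ[ℝ] ℝ[X]) :=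
      (continuous_eval_map_heatFlow (α := α) (q := q) D).continuousOn
        (s := Icc 0 (t + 1) ×ˢ Icc (-1) 1)
    have log_deriv_cont := (eval_cont derivative).div (eval_cont LinearMap.id)
      fun z hz ↦ (hpos z.1 hz.1.1 z.2 hz.2).ne'
    exact (by fun_prop : Continuous fun z : ℝ × ℝ ↦ 1 - z.2 ^ 2).continuousOn.mul
      (((log_deriv_cont.const_mul 2).mul (eval_cont (derivative ∘ₗ ultrasphericalOp α))).sub
        ((log_deriv_cont.pow 2).mul (eval_cont (ultrasphericalOp α))))
  · have hu_ne := (hpos s hs.1 x hx).ne'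
    refine ((((hasDerivAt_map_heatFlow hq (leval x ∘ₗ derivative) s).pow 2).div
      (hasDerivAt_map_heatFlow hq (leval x) s) hu_ne).const_mul (1 - x ^ 2)).congr_deriv ?_
    simp only [LinearMap.comp_apply, leval_apply, Pi.pow_apply]
    field_simp
    ring

lemma monotoneOn_integral_mul_log_sub_fisherInformation_heatFlow (hα : 1 / 4 ≤ α)
    (hq : ∀ k, q k ∈ Module.End.eigenspace (ultrasphericalOp α) (-ultrasphericalEigenvalue α k))
    (hpos : ∀ s, 0 ≤ s → ∀ x ∈ Icc (-1 : ℝ) 1, 0 < (heatFlow α q s).eval x) :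
    MonotoneOn (fun t ↦ 2 * α * ∫ x, (heatFlow α q t).eval x * log ((heatFlow α q t).eval x)
      ∂ultrasphericalMeasure α - fisherInformation α (heatFlow α q t)) (Icc 0 T) := by
  have hα₀ : 0 < α := by linarith
  have := isProbabilityMeasure_ultrasphericalMeasure hα₀
  have hderiv (t : ℝ) (ht : t ∈ interior (Icc 0 T)) :=
    have ht₀ : 0 < t := by simpa using (interior_Icc (a := (0 : ℝ)) ▸ ht).1
    ((hasDerivAt_integral_mul_log_heatFlow hα₀ hq hpos ht₀).const_mul (2 * α)).sub
      (hasDerivAt_fisherInformation_heatFlow hα₀ hq hpos ht₀)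
  refine monotoneOn_of_deriv_nonneg (convex_Icc 0 T) ?_
    (fun t ht ↦ (hderiv t ht).differentiableAt.differentiableWithinAt) fun t ht ↦ ?_
  · exact ((continuousOn_integral_of_isCompact isCompact_Icc ae_ultrasphericalMeasure_mem_Icc
      isCompact_Icc (continuousOn_mul_log_heatFlow hpos)).const_mul _).sub
      (continuousOn_integral_of_isCompact isCompact_Icc ae_ultrasphericalMeasure_mem_Icc
        isCompact_Icc (continuousOn_fisherDensity_heatFlow hpos))
  · have := integral_fisher_dissipation_le hα (hpos t (interior_subset ht).1)
    have hd := (hderiv t ht).deriv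
    simp only [Pi.sub_def] at hd
    rw [hd]
    linarith

lemma fisherInformation_nonneg {p : ℝ[X]} (hp : ∀ x ∈ Icc (-1 : ℝ) 1, 0 < p.eval x) :
    0 ≤ fisherInformation α p := by
  refine integral_nonneg_of_ae ?_
  filter_upwards [ae_ultrasphericalMeasure_mem_Icc] with x hx
  exact mul_nonneg (one_sub_sq_nonneg_of_mem_Icc hx) (div_nonneg (sq_nonneg _) (hp x hx).le)

lemma tendsto_integral_mul_log_heatFlow_atTop (hα : 0 < α)
    (hq : ∀ k, q k ∈ Module.End.eigenspace (ultrasphericalOp α) (-ultrasphericalEigenvalue α k)) :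
    Tendsto (fun t ↦ ∫ x, (heatFlow α q t).eval x * log ((heatFlow α q t).eval x)
      ∂ultrasphericalMeasure α) atTop
      (𝓝 ((∫ x, (heatFlow α q 0).eval x ∂ultrasphericalMeasure α) *
        log (∫ x, (heatFlow α q 0).eval x ∂ultrasphericalMeasure α))) := by
  have := isProbabilityMeasure_ultrasphericalMeasure hα
  obtain ⟨M, hM⟩ := isCompact_Icc.exists_bound_of_continuousOn
    (heatFlow α q 0).continuous.continuousOn (s := Icc (-1 : ℝ) 1)
  have flow_mem (t : ℝ) (ht : 0 ≤ t) (x : ℝ) (hx : x ∈ Icc (-1 : ℝ) 1) :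
      (heatFlow α q t).eval x ∈ Icc (-M) M :=
    ⟨le_eval_heatFlow hα.le hq (fun y hy ↦ (abs_le.1 (hM y hy)).1) ht hx,
      eval_heatFlow_le hα.le hq (fun y hy ↦ (abs_le.1 (hM y hy)).2) ht hx⟩
  have limit : Tendsto _ atTop (𝓝 (∫ x, (q 0).eval x * log ((q 0).eval x)
      ∂ultrasphericalMeasure α)) :=
    tendsto_integral_comp_of_isCompact isCompact_Icc ae_ultrasphericalMeasure_mem_Icc isCompact_Icc
      (φ := fun _ y ↦ y * log y) (continuous_mul_log.comp continuous_snd).continuousOn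
      (Eventually.of_forall fun t ↦ (heatFlow α q t).continuous.continuousOn)
      ((eventually_ge_atTop 0).mono flow_mem) fun x _ ↦ tendsto_eval_heatFlow_atTop hα x
  simpa [← integral_heatFlow hα hq 0] using limit

/-- The monotone quantity at time `0` is bounded by its limit as `t → ∞`, where the heat flow has
become the constant `∫ p` and its Fisher information is nonnegative. -/
theorem two_mul_functionalEntropy_le_fisherInformation (hα : 1 / 4 ≤ α) {p : ℝ[X]}
    (hp : ∀ x ∈ Icc (-1 : ℝ) 1, 0 < p.eval x) :
    2 * α * functionalEntropy (ultrasphericalMeasure α) (fun x ↦ p.eval x) ≤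
      fisherInformation α p := by
  have hα₀ : 0 < α := by linarith
  obtain ⟨q, hq, rfl⟩ := (Submodule.mem_iSup_iff_exists_finsupp _ p).1
    (iSup_eigenspace_ultrasphericalOp hα₀ ▸ Submodule.mem_top)
  rw [← heatFlow_zero (α := α)] at hp ⊢
  have heatFlow_pos (t : ℝ) (ht : 0 ≤ t) (x : ℝ) (hx : x ∈ Icc (-1 : ℝ) 1) :
      0 < (heatFlow α q t).eval x := by
    obtain ⟨y, hy, hmin⟩ := isCompact_Icc.exists_isMinOn ⟨x, hx⟩
      (heatFlow α q 0).continuous.continuousOn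
    exact (hp y hy).trans_le (le_eval_heatFlow hα₀.le hq hmin ht hx)
  have bound (t : ℝ) (ht : 0 ≤ t) : 2 * α * ∫ x, (heatFlow α q 0).eval x *
        log ((heatFlow α q 0).eval x) ∂ultrasphericalMeasure α -
      fisherInformation α (heatFlow α q 0) ≤
      2 * α * ∫ x, (heatFlow α q t).eval x * log ((heatFlow α q t).eval x)
        ∂ultrasphericalMeasure α := by
    have mono := monotoneOn_integral_mul_log_sub_fisherInformation_heatFlow hα hq heatFlow_pos
      (left_mem_Icc.2 ht) (right_mem_Icc.2 ht) ht
    exact mono.trans (sub_le_self _ (fisherInformation_nonneg (heatFlow_pos t ht)))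
  have limit := (tendsto_integral_mul_log_heatFlow_atTop hα₀ hq).const_mul (2 * α)
  have := ge_of_tendsto limit ((eventually_ge_atTop 0).mono bound)
  rw [functionalEntropy]
  linarith

end EntropyDissipation

section Approximation

lemma surjective_derivative (K : Type*) [Field K] [CharZero K] :
    Function.Surjective (derivative : K[X] →ₗ[K] K[X]) := by
  rw [← LinearMap.range_eq_top, eq_top_iff, ← (basisMonomials K).span_eq, Submodule.span_le,
    range_subset_iff]
  refine fun n ↦ ⟨monomial (n + 1) ((n : K) + 1)⁻¹, ?_⟩
  rw [derivative_monomial, Nat.cast_succ, inv_mul_cancel₀ n.cast_add_one_ne_zero,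
    Nat.add_sub_cancel, coe_basisMonomials]

lemma exists_polynomial_near_of_contDiffOn {f : ℝ → ℝ} {a b : ℝ} (hab : a < b)
    (hf : ContDiffOn ℝ 1 f (Icc a b)) {ε : ℝ} (hε : 0 < ε) :
    ∃ P : ℝ[X], ∀ x ∈ Icc a b, |P.eval x - f x| < ε ∧
      |(derivative P).eval x - derivWithin f (Icc a b) x| < ε := by
  have hba := sub_pos.2 hab
  obtain ⟨δ, hδ, hδε⟩ := exists_between (lt_min hε (div_pos hε hba))
  obtain ⟨hδ_lt, hδ_mul⟩ := lt_min_iff.1 hδε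
  obtain ⟨p, hp⟩ := exists_polynomial_near_of_continuousOn a b _
    (hf.continuousOn_derivWithin (uniqueDiffOn_Icc hab) le_rfl) δ hδ
  obtain ⟨P, rfl⟩ := surjective_derivative ℝ p
  refine ⟨P - C (P.eval a - f a), fun x hx ↦ ⟨?_, ?_⟩⟩
  · have error_deriv (y : ℝ) (hy : y ∈ Icc a b) :
        HasDerivWithinAt (fun z ↦ P.eval z - f z)
          ((derivative P).eval y - derivWithin f (Icc a b) y) (Icc a b) y :=
      (P.hasDerivAt y).hasDerivWithinAt.sub
        (hf.differentiableOn one_ne_zero y hy).hasDerivWithinAt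
    calc |(P - C (P.eval a - f a)).eval x - f x|
        = ‖(P.eval x - f x) - (P.eval a - f a)‖ := by
          rw [eval_sub, eval_C, sub_right_comm, Real.norm_eq_abs]
      _ ≤ δ * ‖x - a‖ := (convex_Icc a b).norm_image_sub_le_of_norm_hasDerivWithin_le error_deriv
          (fun y hy ↦ (hp y hy).le) (left_mem_Icc.2 hab.le) hx
      _ ≤ δ * (b - a) := by
          rw [Real.norm_of_nonneg (sub_nonneg.2 hx.1)]
          exact mul_le_mul_of_nonneg_left (sub_le_sub_right hx.2 a) hδ.le
      _ < ε := (lt_div_iff₀ hba).1 hδ_mul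
  · rw [derivative_sub, derivative_C, sub_zero]
    exact (hp x hx).trans hδ_lt

lemma exists_seq_polynomial_tendstoUniformlyOn_of_contDiffOn {f : ℝ → ℝ} {a b : ℝ} (hab : a < b)
    (hf : ContDiffOn ℝ 1 f (Icc a b)) :
    ∃ P : ℕ → ℝ[X], TendstoUniformlyOn (fun n x ↦ (P n).eval x) f atTop (Icc a b) ∧
      TendstoUniformlyOn (fun n x ↦ (derivative (P n)).eval x) (derivWithin f (Icc a b)) atTop
        (Icc a b) := by
  choose P hP using fun n : ℕ ↦
    exists_polynomial_near_of_contDiffOn hab hf (Nat.one_div_pos_of_nat (α := ℝ) (n := n))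
  have tendsto_of_near {u : ℕ → ℝ → ℝ} {v : ℝ → ℝ}
      (h : ∀ n, ∀ x ∈ Icc a b, |u n x - v x| < 1 / ((n : ℝ) + 1)) :
      TendstoUniformlyOn u v atTop (Icc a b) := by
    refine Metric.tendstoUniformlyOn_iff.2 fun ε hε ↦ ?_
    filter_upwards [tendsto_one_div_add_atTop_nhds_zero_nat.eventually_lt_const hε] with n hn x hx
    rw [dist_comm, Real.dist_eq]
    exact (h n x hx).trans hn
  exact ⟨P, tendsto_of_near fun n x hx ↦ (hP n x hx).1, tendsto_of_near fun n x hx ↦ (hP n x hx).2⟩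

end Approximation

section LogSobolev

variable {α : ℝ}

lemma functionalEntropy_sq_add_const_le (hα : 1 / 4 ≤ α) (P : ℝ[X]) {ε : ℝ} (hε : 0 < ε) :
    α / 2 * functionalEntropy (ultrasphericalMeasure α) (fun x ↦ P.eval x ^ 2 + ε) ≤
      ∫ x, (derivative P).eval x ^ 2 * (1 - x ^ 2) ∂ultrasphericalMeasure α := by
  have hα₀ : 0 < α := by linarith
  have hpos (x : ℝ) : 0 < (P ^ 2 + C ε).eval x := by
    simp only [eval_add, eval_pow, eval_C]
    positivity
  have entropy_le := two_mul_functionalEntropy_le_fisherInformation hα fun x _ ↦ hpos x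
  have fisher_le : fisherInformation α (P ^ 2 + C ε) ≤
      4 * ∫ x, (derivative P).eval x ^ 2 * (1 - x ^ 2) ∂ultrasphericalMeasure α := by
    rw [fisherInformation, ← integral_const_mul]
    refine integral_mono_ae (integrable_ultrasphericalMeasure hα₀ ?_)
      (integrable_ultrasphericalMeasure hα₀ (by fun_prop)) ?_
    · exact (by fun_prop (disch := exact fun x ↦ (hpos x).ne') : Continuous _).continuousOn
    filter_upwards [ae_ultrasphericalMeasure_mem_Icc] with x hx
    have density_le : (derivative (P ^ 2 + C ε)).eval x ^ 2 / (P ^ 2 + C ε).eval x ≤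
        4 * (derivative P).eval x ^ 2 := by
      rw [div_le_iff₀ (hpos x)]
      simp only [derivative_add, derivative_C, derivative_sq, eval_add, eval_mul, eval_pow, eval_C,
        add_zero]
      nlinarith [mul_nonneg hε.le (sq_nonneg ((derivative P).eval x))]
    calc (1 - x ^ 2) * ((derivative (P ^ 2 + C ε)).eval x ^ 2 / (P ^ 2 + C ε).eval x)
        ≤ (1 - x ^ 2) * (4 * (derivative P).eval x ^ 2) :=
          mul_le_mul_of_nonneg_left density_le (one_sub_sq_nonneg_of_mem_Icc hx)
      _ = 4 * ((derivative P).eval x ^ 2 * (1 - x ^ 2)) := by ring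
  simp only [eval_add, eval_pow, eval_C] at entropy_le
  linarith

lemma functionalEntropy_eval_sq_le (hα : 1 / 4 ≤ α) (P : ℝ[X]) :
    α / 2 * functionalEntropy (ultrasphericalMeasure α) (fun x ↦ P.eval x ^ 2) ≤
      ∫ x, (derivative P).eval x ^ 2 * (1 - x ^ 2) ∂ultrasphericalMeasure α := by
  have := isProbabilityMeasure_ultrasphericalMeasure (α := α) (by linarith)
  have tendsto_sq : TendstoUniformlyOn (fun ε x ↦ P.eval x ^ 2 + ε) (fun x ↦ P.eval x ^ 2)
      (𝓝[>] 0) (Icc (-1) 1) := by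
    refine Metric.tendstoUniformlyOn_iff.2 fun δ hδ ↦ ?_
    filter_upwards [Ioo_mem_nhdsGT hδ] with ε hε x _
    simpa [abs_of_pos hε.1] using hε.2
  refine le_of_tendsto ((tendsto_functionalEntropy_comp isCompact_Icc
    ae_ultrasphericalMeasure_mem_Icc continuous_id (fun ε ↦ by fun_prop) tendsto_sq).const_mul _) ?_
  filter_upwards [self_mem_nhdsWithin] with ε hε using functionalEntropy_sq_add_const_le hα P hε

lemma functionalEntropy_sq_le (hα : 1 / 4 ≤ α) {f : ℝ → ℝ}
    (hf : ContDiffOn ℝ 1 f (Icc (-1) 1)) :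
    α / 2 * functionalEntropy (ultrasphericalMeasure α) (fun x ↦ f x ^ 2) ≤
      ∫ x, derivWithin f (Icc (-1) 1) x ^ 2 * (1 - x ^ 2) ∂ultrasphericalMeasure α := by
  have := isProbabilityMeasure_ultrasphericalMeasure (α := α) (by linarith)
  obtain ⟨P, hP, hP'⟩ := exists_seq_polynomial_tendstoUniformlyOn_of_contDiffOn (by norm_num) hf
  have entropy_tendsto := tendsto_functionalEntropy_comp isCompact_Icc
    (ae_ultrasphericalMeasure_mem_Icc (α := α)) (continuous_pow 2)
    (fun n ↦ (P n).continuous.continuousOn) hP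
  have energy_tendsto := tendsto_integral_comp_of_tendstoUniformlyOn isCompact_Icc
    (ae_ultrasphericalMeasure_mem_Icc (α := α)) (φ := fun x y ↦ y ^ 2 * (1 - x ^ 2))
    (by fun_prop) (fun n ↦ (derivative (P n)).continuous.continuousOn) hP'
  exact le_of_tendsto_of_tendsto' (entropy_tendsto.const_mul _) energy_tendsto
    fun n ↦ functionalEntropy_eval_sq_le hα (P n)

lemma integral_sq_ultrasphericalMeasure_ne_zero (hα : 0 < α) {f : ℝ → ℝ}
    (hf : ContinuousOn f (Icc (-1) 1)) (hne : ∃ x ∈ Icc (-1 : ℝ) 1, f x ≠ 0) :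
    ∫ x, f x ^ 2 ∂ultrasphericalMeasure α ≠ 0 := by
  intro h
  have ae_zero : (fun x ↦ f x ^ 2) =ᵐ[ultrasphericalMeasure α] 0 :=
    (integral_eq_zero_iff_of_nonneg (fun x ↦ sq_nonneg (f x))
      (integrable_ultrasphericalMeasure hα (hf.pow 2))).1 h
  obtain ⟨x, hx, hfx⟩ := hne
  have eqOn_zero := Measure.eqOn_Icc_of_ae_eq volume (by norm_num)
    ((volume_restrict_absolutelyContinuous_ultrasphericalMeasure hα).ae_le ae_zero) (hf.pow 2)
    continuousOn_const
  exact hfx (sq_eq_zero_iff.1 (eqOn_zero hx))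

theorem ultraspherical_logSobolev_general (hα : 1 / 4 ≤ α) {f : ℝ → ℝ}
    (hf : ContDiffOn ℝ 1 f (Icc (-1) 1)) (hne : ∃ x ∈ Icc (-1 : ℝ) 1, f x ≠ 0) :
    α / 2 * ∫ x, f x ^ 2 * log (f x ^ 2 / ∫ y, f y ^ 2 ∂ultrasphericalMeasure α)
        ∂ultrasphericalMeasure α ≤
      ∫ x, deriv f x ^ 2 * (1 - x ^ 2) ∂ultrasphericalMeasure α := by
  have hα₀ : 0 < α := by linarith
  have hf_sq : ContinuousOn (fun x ↦ f x ^ 2) (Icc (-1) 1) := hf.continuousOn.pow 2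
  have energy_eq : ∫ x, deriv f x ^ 2 * (1 - x ^ 2) ∂ultrasphericalMeasure α =
      ∫ x, derivWithin f (Icc (-1) 1) x ^ 2 * (1 - x ^ 2) ∂ultrasphericalMeasure α := by
    refine integral_congr_ae ?_
    filter_upwards [ae_ultrasphericalMeasure_mem_Ioo] with x hx
    rw [derivWithin_of_mem_nhds (Icc_mem_nhds hx.1 hx.2)]
  rw [energy_eq, integral_mul_log_div_integral (integrable_ultrasphericalMeasure hα₀ hf_sq)
    (integrable_ultrasphericalMeasure hα₀ (continuous_mul_log.comp_continuousOn hf_sq))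
    (integral_sq_ultrasphericalMeasure_ne_zero hα₀ hf.continuousOn hne)]
  exact functionalEntropy_sq_le hα hf

end LogSobolev

theorem ultraspherical_logSobolev (d : ℕ) (hd : 1 ≤ d)
    (f : ℝ → ℝ) (hf : ContDiffOn ℝ 1 f (Set.Icc (-1 : ℝ) 1))
    (hne : ∃ x ∈ Set.Icc (-1 : ℝ) 1, f x ≠ 0) :
    ∫ x, (deriv f x) ^ 2 * (1 - x ^ 2) ∂(nuMeas d) ≥
      (d / 2) * ∫ x, (f x) ^ 2 *
        Real.log ((f x) ^ 2 / ∫ y, (f y) ^ 2 ∂(nuMeas d)) ∂(nuMeas d) :=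
  ultraspherical_logSobolev_general (by linarith [Nat.one_le_cast (α := ℝ).2 hd]) hf hne
end
end

section
/- Improved ultraspherical interpolation inequality for symmetric functions: let d ≥ 2, let p satisfy 2 < p < (2d² + 1)/(d−1)², and set α := 1 − (p−1)(d−1)²/(d(d+2)). Then for every continuously differentiable function f on [−1,1] satisfying f(−x) = f(x) for all x ∈ [−1,1], one has ∫_{−1}^{1} |f'(x)|² ν(x) dν_d(x) ≥ ( d + α(d+2) ) ( ‖f‖_p² − ‖f‖_2² ) / (p − 2), where ‖f‖_q = ( ∫_{−1}^{1} |f|^q dν_d )^{1/q}. -/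
open MeasureTheory Real

noncomputable section

/-!
Write `f = ρ^(1/p)` and let `ρ` solve the linear heat equation of the ultraspherical operator
`L = ν ∂² - D x ∂`, where `D` is a real dimension. Two integrations by parts express the time
derivative of `∫ ν f'² + κ ∫ f²` through `∫ ν f'²` and the integral of a quadratic form in `ν f''`
and `ν f'² / f`. After completing a square, the sharper Poincaré inequality
`(D + 2) ∫ ν f'² ≤ ∫ ν² f''²` satisfied by even functions makes this derivative nonpositive for the
stated constant `κ`. As `t → ∞`, `ρ` tends to its mean and the quantity to `κ (∫ ρ)^(2/p)`.

For a polynomial `ρ` the flow is explicit in a basis of eigenvectors of `L`, and in the variable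
`s = e^(-t)` it extends continuously to the equilibrium `s = 0`. The general case follows by
approximating `ρ` by polynomials in `C¹`, after replacing `f` by the positive function `√(f² + ε)`.
-/

namespace Ultraspherical

open Set Filter Polynomial Topology

section Measure

/-- The ultraspherical probability measure `Z_D⁻¹ (1 - x²)^(D/2 - 1) dx` on `(-1, 1)`, for a real
dimension parameter `D`, with `Z_D = √π Γ(D/2) / Γ((D + 1)/2)`. -/
def ultrasphericalMeasure (D : ℝ) : Measure ℝ :=
  (volume.restrict (Ioo (-1 : ℝ) 1)).withDensity fun x =>
    ENNReal.ofReal ((1 - x ^ 2) ^ (D / 2 - 1) / (√π * Gamma (D / 2) / Gamma ((D + 1) / 2)))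

lemma integral_rpow_mul_one_sub_rpow {a b : ℝ} (ha : 0 < a) (hb : 0 < b) :
    ∫ x in (0 : ℝ)..1, x ^ (a - 1) * (1 - x) ^ (b - 1) = Gamma a * Gamma b / Gamma (a + b) := by
  have real_integrand : ∀ x ∈ uIcc (0 : ℝ) 1,
      (x : ℂ) ^ ((a : ℂ) - 1) * (1 - (x : ℂ)) ^ ((b : ℂ) - 1)
        = ((x ^ (a - 1) * (1 - x) ^ (b - 1) : ℝ) : ℂ) := by
    intro x hx
    rw [uIcc_of_le zero_le_one] at hx
    rw [Complex.ofReal_mul, Complex.ofReal_cpow hx.1, Complex.ofReal_cpow (sub_nonneg.2 hx.2)]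
    push_cast
    rfl
  change _ = ProbabilityTheory.beta a b
  rw [ProbabilityTheory.beta_eq_betaIntegralReal a b ha hb, Complex.betaIntegral,
    intervalIntegral.integral_congr real_integrand, intervalIntegral.integral_ofReal,
    Complex.ofReal_re]

lemma integral_one_sub_sq_rpow {a : ℝ} (ha : 0 < a) :
    ∫ x in (-1 : ℝ)..1, (1 - x ^ 2) ^ (a - 1) = √π * Gamma a / Gamma (a + 1 / 2) := by
  have substitution := intervalIntegral.integral_comp_mul_sub (a := (0 : ℝ)) (b := 1)
    (fun x => (1 - x ^ 2) ^ (a - 1)) (two_ne_zero' ℝ) 1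
  have beta_integrand : ∀ x ∈ uIcc (0 : ℝ) 1, (1 - (2 * x - 1) ^ 2) ^ (a - 1)
      = (4 : ℝ) ^ (a - 1) * (x ^ (a - 1) * (1 - x) ^ (a - 1)) := by
    intro x hx
    rw [uIcc_of_le zero_le_one] at hx
    have h1 : 0 ≤ 1 - x := sub_nonneg.2 hx.2
    rw [← mul_rpow hx.1 h1, ← mul_rpow (by norm_num) (mul_nonneg hx.1 h1)]
    congr 1
    ring
  have powers_of_two : (4 : ℝ) ^ (a - 1) * 2 ^ (1 - 2 * a) = 1 / 2 := by
    rw [show (4 : ℝ) = 2 ^ (2 : ℝ) by norm_num, ← rpow_mul zero_le_two, ← rpow_add zero_lt_two,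
      show 2 * (a - 1) + (1 - 2 * a) = -1 by ring, rpow_neg_one, one_div]
  rw [intervalIntegral.integral_congr beta_integrand, intervalIntegral.integral_const_mul,
    integral_rpow_mul_one_sub_rpow ha ha] at substitution
  norm_num at substitution
  have hΓ := (Gamma_pos_of_pos (show 0 < 2 * a by linarith)).ne'
  rw [← two_mul] at substitution
  rw [eq_div_iff (Gamma_pos_of_pos (by linarith)).ne']
  calc _ = 2 * (4 : ℝ) ^ (a - 1) * Gamma a * (Gamma a * Gamma (a + 1 / 2)) / Gamma (2 * a) := by
        linear_combination -2 * Gamma (a + 1 / 2) * substitution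
    _ = 2 * ((4 : ℝ) ^ (a - 1) * 2 ^ (1 - 2 * a)) * √π * Gamma a := by
        rw [Gamma_mul_Gamma_add_half]
        field_simp
    _ = √π * Gamma a := by rw [powers_of_two]; ring

variable {D : ℝ}

lemma integral_one_sub_sq_rpow_half (hD : 0 < D) :
    ∫ x in (-1 : ℝ)..1, (1 - x ^ 2) ^ (D / 2 - 1) = √π * Gamma (D / 2) / Gamma ((D + 1) / 2) := by
  rw [integral_one_sub_sq_rpow (half_pos hD), ← add_div]

lemma normalization_pos (hD : 0 < D) : 0 < √π * Gamma (D / 2) / Gamma ((D + 1) / 2) := by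
  have := Gamma_pos_of_pos (half_pos hD)
  have := Gamma_pos_of_pos (show 0 < (D + 1) / 2 by linarith)
  positivity

lemma one_sub_sq_pos {x : ℝ} (hx : x ∈ Ioo (-1 : ℝ) 1) : 0 < 1 - x ^ 2 := by
  nlinarith [hx.1, hx.2]

lemma one_sub_sq_nonneg {x : ℝ} (hx : x ∈ Icc (-1 : ℝ) 1) : 0 ≤ 1 - x ^ 2 := by
  nlinarith [hx.1, hx.2]

lemma intervalIntegrable_one_sub_sq_rpow (hD : 0 < D) :
    IntervalIntegrable (fun x => (1 - x ^ 2) ^ (D / 2 - 1)) volume (-1 : ℝ) 1 := by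
  refine not_imp_comm.1 intervalIntegral.integral_undef ?_
  rw [integral_one_sub_sq_rpow_half hD]
  exact (normalization_pos hD).ne'

lemma isProbabilityMeasure_ultrasphericalMeasure (hD : 0 < D) :
    IsProbabilityMeasure (ultrasphericalMeasure D) := by
  have hint : IntegrableOn (fun x : ℝ => (1 - x ^ 2) ^ (D / 2 - 1)) (Ioo (-1) 1) :=
    ((intervalIntegrable_iff_integrableOn_Ioc_of_le (by norm_num)).1
      (intervalIntegrable_one_sub_sq_rpow hD)).mono_set Ioo_subset_Ioc_self
  constructor
  rw [ultrasphericalMeasure, withDensity_apply _ MeasurableSet.univ, Measure.restrict_univ,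
    ← ofReal_integral_eq_lintegral_ofReal (hint.div_const _), integral_div,
    ← integral_Ioc_eq_integral_Ioo, ← intervalIntegral.integral_of_le (by norm_num),
    integral_one_sub_sq_rpow_half hD, div_self (normalization_pos hD).ne', ENNReal.ofReal_one]
  filter_upwards [ae_restrict_mem measurableSet_Ioo] with x hx
  exact div_nonneg (rpow_nonneg (one_sub_sq_pos hx).le _) (normalization_pos hD).le

lemma ae_mem_Ioo : ∀ᵐ x ∂ultrasphericalMeasure D, x ∈ Ioo (-1 : ℝ) 1 :=
  (withDensity_absolutelyContinuous _ _).ae_le (ae_restrict_mem measurableSet_Ioo)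

lemma ae_mem_Icc : ∀ᵐ x ∂ultrasphericalMeasure D, x ∈ Icc (-1 : ℝ) 1 :=
  ae_mem_Ioo.mono fun _ hx => Ioo_subset_Icc_self hx

lemma integral_ultrasphericalMeasure (hD : 0 < D) (h : ℝ → ℝ) :
    ∫ x, h x ∂ultrasphericalMeasure D = (√π * Gamma (D / 2) / Gamma ((D + 1) / 2))⁻¹ *
      ∫ x in (-1 : ℝ)..1, (1 - x ^ 2) ^ (D / 2 - 1) * h x := by
  rw [ultrasphericalMeasure, integral_withDensity_eq_integral_toReal_smul (by fun_prop)
    (Eventually.of_forall fun _ => ENNReal.ofReal_lt_top),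
    intervalIntegral.integral_of_le (by norm_num), integral_Ioc_eq_integral_Ioo,
    ← integral_const_mul]
  refine setIntegral_congr_fun measurableSet_Ioo fun x hx => ?_
  have hw : 0 ≤ (1 - x ^ 2) ^ (D / 2 - 1) := rpow_nonneg (one_sub_sq_pos hx).le _
  rw [ENNReal.toReal_ofReal (div_nonneg hw (normalization_pos hD).le), smul_eq_mul]
  ring

end Measure

section ConcentratedOnCompact

lemma exists_isCompact_eventually_mapsTo {X : Type*} [TopologicalSpace X] {K : Set X}
    (hK : IsCompact K) {E : Type*} [PseudoMetricSpace E] [ProperSpace E] {U : Set E}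
    (hU : IsOpen U) {ι : Type*} {l : Filter ι} {w : ι → X → E} {w₀ : X → E}
    (hw₀ : ContinuousOn w₀ K) (hw₀U : MapsTo w₀ K U) (hlim : TendstoUniformlyOn w w₀ l K) :
    ∃ C, IsCompact C ∧ C ⊆ U ∧ MapsTo w₀ K C ∧ ∀ᶠ i in l, MapsTo (w i) K C := by
  have himage := hK.image_of_continuousOn hw₀
  obtain ⟨δ, hδ, hδU⟩ := himage.exists_cthickening_subset_open hU hw₀U.image_subset
  refine ⟨Metric.cthickening δ (w₀ '' K), himage.cthickening, hδU,
    fun x hx => Metric.self_subset_cthickening _ (mem_image_of_mem _ hx), ?_⟩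
  filter_upwards [Metric.tendstoUniformlyOn_iff.1 hlim δ hδ] with i hi x hx
  exact Metric.mem_cthickening_of_dist_le _ _ _ _ (mem_image_of_mem _ hx)
    ((dist_comm _ _).trans_le (hi x hx).le)

variable {X : Type*} [TopologicalSpace X] [T2Space X] [MeasurableSpace X] [OpensMeasurableSpace X]
  {μ : Measure X} [IsFiniteMeasure μ] {K : Set X}

lemma integrable_of_continuousOn_of_ae_mem (hK : IsCompact K) (hμ : ∀ᵐ x ∂μ, x ∈ K) {f : X → ℝ}
    (hf : ContinuousOn f K) : Integrable f μ := by
  rw [← Measure.restrict_eq_self_of_ae_mem hμ]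
  exact hf.integrableOn_compact hK

lemma tendsto_integral_comp_of_ae_mem (hK : IsCompact K) (hμ : ∀ᵐ x ∂μ, x ∈ K)
    {E : Type*} [TopologicalSpace E] {C : Set E} (hC : IsCompact C) {Φ : E → ℝ}
    (hΦ : ContinuousOn Φ C) {ι : Type*} {l : Filter ι} [l.IsCountablyGenerated]
    {w : ι → X → E} {w₀ : X → E} (hw : ∀ᶠ i in l, ContinuousOn (w i) K)
    (hwC : ∀ᶠ i in l, MapsTo (w i) K C) (hw₀ : MapsTo w₀ K C)
    (hlim : ∀ x ∈ K, Tendsto (fun i => w i x) l (𝓝 (w₀ x))) :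
    Tendsto (fun i => ∫ x, Φ (w i x) ∂μ) l (𝓝 (∫ x, Φ (w₀ x) ∂μ)) := by
  obtain ⟨B, hB⟩ := hC.exists_bound_of_continuousOn hΦ
  refine tendsto_integral_filter_of_dominated_convergence (fun _ => B) ?_ ?_
    (integrable_const B) ?_
  · filter_upwards [hw, hwC] with i hi hiC
    exact (integrable_of_continuousOn_of_ae_mem hK hμ (hΦ.comp hi hiC)).aestronglyMeasurable
  · filter_upwards [hwC] with i hiC
    exact hμ.mono fun x hx => hB _ (hiC hx)
  · refine hμ.mono fun x hx => (hΦ _ (hw₀ hx)).tendsto.comp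
      (tendsto_nhdsWithin_iff.2 ⟨hlim x hx, ?_⟩)
    exact hwC.mono fun i hiC => hiC hx

lemma continuousOn_integral_of_ae_mem (hK : IsCompact K) (hμ : ∀ᵐ x ∂μ, x ∈ K)
    {T : Type*} [TopologicalSpace T] [FirstCountableTopology T] {S : Set T} (hS : IsCompact S)
    {F : T → X → ℝ} (hF : ContinuousOn (fun z : T × X => F z.1 z.2) (S ×ˢ K)) :
    ContinuousOn (fun t => ∫ x, F t x ∂μ) S := by
  intro t ht
  refine tendsto_integral_comp_of_ae_mem hK hμ (hS.prod hK) hF (w := Prod.mk) (w₀ := Prod.mk t)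
    (Eventually.of_forall fun _ => by fun_prop) ?_ (fun x hx => ⟨ht, hx⟩) fun x _ => ?_
  · exact eventually_mem_nhdsWithin.mono fun t ht x hx => ⟨ht, hx⟩
  · exact tendsto_nhdsWithin_of_tendsto_nhds
      (by fun_prop : Continuous fun t : T => (t, x)).continuousAt

lemma hasDerivAt_integral_of_ae_mem (hK : IsCompact K) (hμ : ∀ᵐ x ∂μ, x ∈ K) {U : Set ℝ}
    (hU : IsOpen U) {F F' : ℝ → X → ℝ} (hF : ∀ s ∈ U, ContinuousOn (F s) K)
    (hF' : ContinuousOn (fun z : ℝ × X => F' z.1 z.2) (U ×ˢ K))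
    (hderiv : ∀ s ∈ U, ∀ x ∈ K, HasDerivAt (fun s => F s x) (F' s x) s) {s : ℝ} (hs : s ∈ U) :
    HasDerivAt (fun s => ∫ x, F s x ∂μ) (∫ x, F' s x ∂μ) s := by
  obtain ⟨V, hV, hVU, hVc⟩ := local_compact_nhds (hU.mem_nhds hs)
  obtain ⟨B, hB⟩ := (hVc.prod hK).exists_bound_of_continuousOn (hF'.mono (prod_mono_left hVU))
  have slice : ContinuousOn (F' s) K :=
    hF'.comp (by fun_prop : ContinuousOn (fun x : X => (s, x)) K) fun x hx => ⟨hs, hx⟩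
  exact (hasDerivAt_integral_of_dominated_loc_of_deriv_le hV
    (eventually_of_mem (hU.mem_nhds hs) fun s hs =>
      (integrable_of_continuousOn_of_ae_mem hK hμ (hF s hs)).aestronglyMeasurable)
    (integrable_of_continuousOn_of_ae_mem hK hμ (hF s hs))
    (integrable_of_continuousOn_of_ae_mem hK hμ slice).aestronglyMeasurable
    (hμ.mono fun x hx s hs => hB (s, x) ⟨hs, hx⟩) (integrable_const B)
    (hμ.mono fun x hx s hs => hderiv s (hVU hs) x hx)).2

end ConcentratedOnCompact

section IntegrationByParts

variable {D : ℝ}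

lemma integrable_of_continuousOn (hD : 0 < D) {f : ℝ → ℝ} (hf : ContinuousOn f (Icc (-1) 1)) :
    Integrable f (ultrasphericalMeasure D) :=
  have := isProbabilityMeasure_ultrasphericalMeasure hD
  integrable_of_continuousOn_of_ae_mem isCompact_Icc ae_mem_Icc hf

lemma hasDerivAt_one_sub_sq_rpow (D : ℝ) {x : ℝ} (hx : x ∈ Ioo (-1 : ℝ) 1) :
    HasDerivAt (fun x => (1 - x ^ 2) ^ (D / 2)) (-(D * x) * (1 - x ^ 2) ^ (D / 2 - 1)) x := by
  convert ((hasDerivAt_pow 2 x).const_sub 1).rpow_const (p := D / 2)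
    (Or.inl (one_sub_sq_pos hx).ne') using 1
  ring

lemma integral_eq_of_sub_eq_divergence (hD : 0 < D) {A B G G' : ℝ → ℝ}
    (hA : ContinuousOn A (Icc (-1) 1)) (hB : ContinuousOn B (Icc (-1) 1))
    (hG : ∀ x ∈ Icc (-1 : ℝ) 1, HasDerivWithinAt G (G' x) (Icc (-1) 1) x)
    (h : ∀ x ∈ Icc (-1 : ℝ) 1, A x - B x = (1 - x ^ 2) * G' x - D * x * G x) :
    ∫ x, A x ∂ultrasphericalMeasure D = ∫ x, B x ∂ultrasphericalMeasure D := by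
  have flux_deriv : ∀ x ∈ Ioo (-1 : ℝ) 1, HasDerivAt (fun x => (1 - x ^ 2) ^ (D / 2) * G x)
      ((1 - x ^ 2) ^ (D / 2 - 1) * (A x - B x)) x := by
    intro x hx
    refine ((hasDerivAt_one_sub_sq_rpow D hx).mul
      ((hG x (Ioo_subset_Icc_self hx)).hasDerivAt (Icc_mem_nhds hx.1 hx.2))).congr_deriv ?_
    have hν : (1 - x ^ 2) ^ (D / 2) = (1 - x ^ 2) ^ (D / 2 - 1) * (1 - x ^ 2) := by
      rw [← rpow_add_one (one_sub_sq_pos hx).ne', sub_add_cancel]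
    rw [h x (Ioo_subset_Icc_self hx), hν]
    ring
  have flux_cont : ContinuousOn (fun x => (1 - x ^ 2) ^ (D / 2) * G x) (Icc (-1) 1) :=
    (Continuous.rpow_const (by fun_prop) fun _ => Or.inr (half_pos hD).le).continuousOn.mul
      fun x hx => (hG x hx).continuousWithinAt
  have hAB : ContinuousOn (fun x => A x - B x) (uIcc (-1) 1) := by
    rw [uIcc_of_le (by norm_num)]
    exact hA.sub hB
  rw [← sub_eq_zero, ← integral_sub (integrable_of_continuousOn hD hA)
    (integrable_of_continuousOn hD hB), integral_ultrasphericalMeasure hD,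
    intervalIntegral.integral_eq_sub_of_hasDerivAt_of_le (by norm_num) flux_cont flux_deriv
      ((intervalIntegrable_one_sub_sq_rpow hD).mul_continuousOn hAB)]
  simp [zero_rpow (half_pos hD).ne']

variable {u u' u'' : ℝ → ℝ}

lemma integral_ultraspherical_mul (hD : 0 < D) {w w' : ℝ → ℝ}
    (hu' : ∀ x ∈ Icc (-1 : ℝ) 1, HasDerivWithinAt u' (u'' x) (Icc (-1) 1) x)
    (hu'' : ContinuousOn u'' (Icc (-1) 1))
    (hw : ∀ x ∈ Icc (-1 : ℝ) 1, HasDerivWithinAt w (w' x) (Icc (-1) 1) x)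
    (hw' : ContinuousOn w' (Icc (-1) 1)) :
    ∫ x, ((1 - x ^ 2) * u'' x - D * x * u' x) * w x ∂ultrasphericalMeasure D
      = ∫ x, -((1 - x ^ 2) * u' x * w' x) ∂ultrasphericalMeasure D := by
  have cu' : ContinuousOn u' (Icc (-1) 1) := fun x hx => (hu' x hx).continuousWithinAt
  have cw : ContinuousOn w (Icc (-1) 1) := fun x hx => (hw x hx).continuousWithinAt
  refine integral_eq_of_sub_eq_divergence hD (by fun_prop) (by fun_prop)
    (fun x hx => (hu' x hx).mul (hw x hx)) fun x _ => ?_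
  simp only [Pi.mul_apply]
  ring

lemma integral_ultraspherical_sq (hD : 0 < D)
    (hu' : ∀ x ∈ Icc (-1 : ℝ) 1, HasDerivWithinAt u' (u'' x) (Icc (-1) 1) x)
    (hu'' : ContinuousOn u'' (Icc (-1) 1)) :
    ∫ x, ((1 - x ^ 2) * u'' x - D * x * u' x) ^ 2 ∂ultrasphericalMeasure D
      = ∫ x, ((1 - x ^ 2) ^ 2 * u'' x ^ 2 + D * ((1 - x ^ 2) * u' x ^ 2))
          ∂ultrasphericalMeasure D := by
  have cu' : ContinuousOn u' (Icc (-1) 1) := fun x hx => (hu' x hx).continuousWithinAt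
  refine integral_eq_of_sub_eq_divergence hD (by fun_prop) (by fun_prop)
    (fun x hx => ((hasDerivWithinAt_id x _).const_mul (-D)).mul ((hu' x hx).pow 2)) fun x _ => ?_
  simp only [Pi.mul_apply, Pi.pow_apply, id]
  ring

lemma integral_ultraspherical_mul_sq_div (hD : 0 < D)
    (hu0 : ∀ x ∈ Icc (-1 : ℝ) 1, u x ≠ 0)
    (hu : ∀ x ∈ Icc (-1 : ℝ) 1, HasDerivWithinAt u (u' x) (Icc (-1) 1) x)
    (hu' : ∀ x ∈ Icc (-1 : ℝ) 1, HasDerivWithinAt u' (u'' x) (Icc (-1) 1) x)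
    (hu'' : ContinuousOn u'' (Icc (-1) 1)) :
    ∫ x, ((1 - x ^ 2) * u'' x - D * x * u' x) * ((1 - x ^ 2) * u' x ^ 2 / u x)
        ∂ultrasphericalMeasure D
      = ∫ x, (1 - x ^ 2) ^ 2 * (D / (D + 2) * (u' x ^ 2 / u x) ^ 2
          - 2 * (D - 1) / (D + 2) * (u'' x * (u' x ^ 2 / u x))) ∂ultrasphericalMeasure D := by
  have cu : ContinuousOn u (Icc (-1) 1) := fun x hx => (hu x hx).continuousWithinAt
  have cu' : ContinuousOn u' (Icc (-1) 1) := fun x hx => (hu' x hx).continuousWithinAt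
  refine integral_eq_of_sub_eq_divergence hD (by fun_prop (disch := assumption))
    (by fun_prop (disch := assumption)) (fun x hx =>
      ((((hasDerivWithinAt_id x _).pow 2).const_sub 1).const_mul (D / (D + 2))).mul
        (((hu' x hx).pow 3).div (hu x hx) (hu0 x hx))) fun x hx => ?_
  have := hu0 x hx
  simp only [Pi.mul_apply, Pi.div_apply, Pi.pow_apply, id]
  field_simp
  ring

/-- The improved Poincaré inequality: on functions whose derivative vanishes at `0`, the second
eigenvalue `2 (D + 1)` of the ultraspherical operator takes over from the first one. -/
lemma integral_deriv_sq_le_of_deriv_eq_mul (hD : 0 < D) {v v' : ℝ → ℝ}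
    (hv : ∀ x ∈ Icc (-1 : ℝ) 1, HasDerivWithinAt v (v' x) (Icc (-1) 1) x)
    (hv' : ContinuousOn v' (Icc (-1) 1)) (huv : ∀ x ∈ Icc (-1 : ℝ) 1, u' x = x * v x)
    (hu' : ∀ x ∈ Icc (-1 : ℝ) 1, HasDerivWithinAt u' (u'' x) (Icc (-1) 1) x) :
    (D + 2) * ∫ x, (1 - x ^ 2) * u' x ^ 2 ∂ultrasphericalMeasure D
      ≤ ∫ x, (1 - x ^ 2) ^ 2 * u'' x ^ 2 ∂ultrasphericalMeasure D := by
  have cu' : ContinuousOn u' (Icc (-1) 1) := fun x hx => (hu' x hx).continuousWithinAt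
  have cv : ContinuousOn v (Icc (-1) 1) := fun x hx => (hv x hx).continuousWithinAt
  have hu''v : ∀ x ∈ Icc (-1 : ℝ) 1, u'' x = v x + x * v' x := by
    intro x hx
    refine (uniqueDiffOn_Icc (by norm_num) x hx).eq_deriv _ (hu' x hx) ?_
    simpa using ((hasDerivWithinAt_id x _).mul (hv x hx)).congr huv (huv x hx)
  have hu'' : ContinuousOn u'' (Icc (-1) 1) :=
    ContinuousOn.congr (by fun_prop : ContinuousOn (fun x => v x + x * v' x) _) hu''v
  have expand : ∫ x, (1 - x ^ 2) ^ 2 * u'' x ^ 2 ∂ultrasphericalMeasure D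
      = ∫ x, ((D + 2) * ((1 - x ^ 2) * u' x ^ 2) + (1 - x ^ 2) ^ 2 * (x * v' x) ^ 2)
          ∂ultrasphericalMeasure D := by
    refine integral_eq_of_sub_eq_divergence hD (by fun_prop) (by fun_prop) (fun x hx =>
      ((((hasDerivWithinAt_id x _).pow 2).const_sub 1).mul (hasDerivWithinAt_id x _)).mul
        ((hv x hx).pow 2)) fun x hx => ?_
    rw [hu''v x hx, huv x hx]
    simp only [Pi.mul_apply, Pi.pow_apply, id]
    ring
  rw [expand, ← integral_const_mul]
  refine integral_mono (integrable_of_continuousOn hD (by fun_prop))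
    (integrable_of_continuousOn hD (by fun_prop)) fun x => ?_
  exact le_add_of_nonneg_right (by positivity)

end IntegrationByParts

section Dissipation

variable {D p κ : ℝ} {u u' u'' V V' : ℝ → ℝ}

lemma integral_mul_nonlinear_generator (hD : 0 < D) (hu0 : ∀ x ∈ Icc (-1 : ℝ) 1, u x ≠ 0)
    (hu : ∀ x ∈ Icc (-1 : ℝ) 1, HasDerivWithinAt u (u' x) (Icc (-1) 1) x)
    (hu' : ∀ x ∈ Icc (-1 : ℝ) 1, HasDerivWithinAt u' (u'' x) (Icc (-1) 1) x)
    (hu'' : ContinuousOn u'' (Icc (-1) 1))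
    (hVu : ∀ x ∈ Icc (-1 : ℝ) 1,
      V x = (1 - x ^ 2) * u'' x - D * x * u' x + (p - 1) * ((1 - x ^ 2) * u' x ^ 2 / u x)) :
    ∫ x, u x * V x ∂ultrasphericalMeasure D
      = (p - 2) * ∫ x, (1 - x ^ 2) * u' x ^ 2 ∂ultrasphericalMeasure D := by
  have cu : ContinuousOn u (Icc (-1) 1) := fun x hx => (hu x hx).continuousWithinAt
  have cu' : ContinuousOn u' (Icc (-1) 1) := fun x hx => (hu' x hx).continuousWithinAt
  have by_parts := integral_ultraspherical_mul hD hu' hu'' hu cu'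
  have expand : ∀ᵐ x ∂ultrasphericalMeasure D, u x * V x
      = ((1 - x ^ 2) * u'' x - D * x * u' x) * u x + (p - 1) * ((1 - x ^ 2) * u' x ^ 2) := by
    filter_upwards [ae_mem_Icc] with x hx
    have := hu0 x hx
    rw [hVu x hx]
    field_simp
  rw [integral_congr_ae expand, integral_add (integrable_of_continuousOn hD (by fun_prop))
    (integrable_of_continuousOn hD (by fun_prop)), by_parts, integral_neg, integral_const_mul]
  simp only [mul_assoc, ← sq]
  ring

lemma integral_generator_mul_nonlinear_generator (hD : 0 < D)
    (hu0 : ∀ x ∈ Icc (-1 : ℝ) 1, u x ≠ 0)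
    (hu : ∀ x ∈ Icc (-1 : ℝ) 1, HasDerivWithinAt u (u' x) (Icc (-1) 1) x)
    (hu' : ∀ x ∈ Icc (-1 : ℝ) 1, HasDerivWithinAt u' (u'' x) (Icc (-1) 1) x)
    (hu'' : ContinuousOn u'' (Icc (-1) 1))
    (hVu : ∀ x ∈ Icc (-1 : ℝ) 1,
      V x = (1 - x ^ 2) * u'' x - D * x * u' x + (p - 1) * ((1 - x ^ 2) * u' x ^ 2 / u x)) :
    ∫ x, ((1 - x ^ 2) * u'' x - D * x * u' x) * V x ∂ultrasphericalMeasure D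
      = D * (∫ x, (1 - x ^ 2) * u' x ^ 2 ∂ultrasphericalMeasure D)
        + ∫ x, (1 - x ^ 2) ^ 2 * (u'' x ^ 2
          + (p - 1) * (D / (D + 2) * (u' x ^ 2 / u x) ^ 2
            - 2 * (D - 1) / (D + 2) * (u'' x * (u' x ^ 2 / u x)))) ∂ultrasphericalMeasure D := by
  have cu : ContinuousOn u (Icc (-1) 1) := fun x hx => (hu x hx).continuousWithinAt
  have cu' : ContinuousOn u' (Icc (-1) 1) := fun x hx => (hu' x hx).continuousWithinAt
  have expand : ∀ᵐ x ∂ultrasphericalMeasure D, ((1 - x ^ 2) * u'' x - D * x * u' x) * V x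
      = ((1 - x ^ 2) * u'' x - D * x * u' x) ^ 2 + (p - 1) *
        (((1 - x ^ 2) * u'' x - D * x * u' x) * ((1 - x ^ 2) * u' x ^ 2 / u x)) := by
    filter_upwards [ae_mem_Icc] with x hx
    rw [hVu x hx]
    ring
  rw [integral_congr_ae expand, integral_add, integral_const_mul,
    integral_ultraspherical_sq hD hu' hu'', integral_ultraspherical_mul_sq_div hD hu0 hu hu' hu'',
    integral_add, integral_const_mul, add_comm (∫ x, (1 - x ^ 2) ^ 2 * u'' x ^ 2 ∂_), add_assoc,
    ← integral_const_mul (p - 1), ← integral_add]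
  · congr 2 with x
    ring
  all_goals exact integrable_of_continuousOn hD (by fun_prop (disch := assumption))

lemma dissipation_nonpos (hD : 0 < D) (hp : 1 ≤ p) (hα : (p - 1) * (D - 1) ^ 2 ≤ D * (D + 2))
    (hκ : κ * (p - 2) = D + (1 - (p - 1) * (D - 1) ^ 2 / (D * (D + 2))) * (D + 2))
    (hu0 : ∀ x ∈ Icc (-1 : ℝ) 1, u x ≠ 0)
    (hu : ∀ x ∈ Icc (-1 : ℝ) 1, HasDerivWithinAt u (u' x) (Icc (-1) 1) x)
    (hu' : ∀ x ∈ Icc (-1 : ℝ) 1, HasDerivWithinAt u' (u'' x) (Icc (-1) 1) x)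
    (hu'' : ContinuousOn u'' (Icc (-1) 1))
    (hpoincare : (D + 2) * ∫ x, (1 - x ^ 2) * u' x ^ 2 ∂ultrasphericalMeasure D
      ≤ ∫ x, (1 - x ^ 2) ^ 2 * u'' x ^ 2 ∂ultrasphericalMeasure D)
    (hV : ∀ x ∈ Icc (-1 : ℝ) 1, HasDerivWithinAt V (V' x) (Icc (-1) 1) x)
    (hV' : ContinuousOn V' (Icc (-1) 1))
    (hVu : ∀ x ∈ Icc (-1 : ℝ) 1,
      V x = (1 - x ^ 2) * u'' x - D * x * u' x + (p - 1) * ((1 - x ^ 2) * u' x ^ 2 / u x)) :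
    ∫ x, ((1 - x ^ 2) * u' x * V' x + κ * (u x * V x)) ∂ultrasphericalMeasure D ≤ 0 := by
  have cu : ContinuousOn u (Icc (-1) 1) := fun x hx => (hu x hx).continuousWithinAt
  have cu' : ContinuousOn u' (Icc (-1) 1) := fun x hx => (hu' x hx).continuousWithinAt
  have cV : ContinuousOn V (Icc (-1) 1) := fun x hx => (hV x hx).continuousWithinAt
  set α := 1 - (p - 1) * (D - 1) ^ 2 / (D * (D + 2)) with α_def
  have α_nonneg : 0 ≤ α := sub_nonneg.2 (div_le_one_of_le₀ hα (by positivity))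
  have by_parts := integral_ultraspherical_mul hD hu' hu'' hV hV'
  have gradient := integral_generator_mul_nonlinear_generator hD hu0 hu hu' hu'' hVu
  have mass := integral_mul_nonlinear_generator hD hu0 hu hu' hu'' hVu
  have square_le : α * ∫ x, (1 - x ^ 2) ^ 2 * u'' x ^ 2 ∂ultrasphericalMeasure D
      ≤ ∫ x, (1 - x ^ 2) ^ 2 * (u'' x ^ 2 + (p - 1) * (D / (D + 2) * (u' x ^ 2 / u x) ^ 2
          - 2 * (D - 1) / (D + 2) * (u'' x * (u' x ^ 2 / u x)))) ∂ultrasphericalMeasure D := by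
    rw [← integral_const_mul]
    refine integral_mono (integrable_of_continuousOn hD (by fun_prop))
      (integrable_of_continuousOn hD (by fun_prop (disch := assumption))) fun x => ?_
    rw [← sub_nonneg]
    have hp' : 0 ≤ (p - 1) / (D * (D + 2)) := div_nonneg (by linarith) (by positivity)
    refine (mul_nonneg hp' (sq_nonneg
      ((1 - x ^ 2) * ((D - 1) * u'' x - D * (u' x ^ 2 / u x))))).trans_eq ?_
    dsimp only
    generalize u' x ^ 2 / u x = b
    rw [α_def]
    field_simp
    ring
  rw [integral_neg] at by_parts
  rw [integral_add, integral_const_mul, mass, ← mul_assoc, hκ]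
  · linarith [mul_le_mul_of_nonneg_left hpoincare α_nonneg]
  all_goals exact integrable_of_continuousOn hD (by fun_prop)

end Dissipation

section SpectralDecomposition

variable {K V : Type*} [Field K] [AddCommGroup V] [Module K V] {T : Module.End K V} {S : Set K}
  {a : K}

lemma iSup_eigenspace_le_map_sub (ha : a ∉ S) :
    ⨆ b ∈ S, T.eigenspace b ≤ (⨆ b ∈ S, T.eigenspace b).map (T - a • 1) := by
  refine iSup₂_le fun b hb v hv => ⟨(b - a)⁻¹ • v,
    Submodule.smul_mem _ _ (Submodule.mem_iSup_of_mem b (Submodule.mem_iSup_of_mem hb hv)), ?_⟩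
  have hba : b - a ≠ 0 := sub_ne_zero.2 (ne_of_mem_of_not_mem hb ha)
  simp [Module.End.mem_eigenspace_iff.1 hv, ← sub_smul, ← smul_assoc, hba]

lemma mem_iSup_eigenspace_insert (ha : a ∉ S) {v : V}
    (hv : T v - a • v ∈ ⨆ b ∈ S, T.eigenspace b) : v ∈ ⨆ b ∈ insert a S, T.eigenspace b := by
  obtain ⟨w, hw, hwv⟩ := iSup_eigenspace_le_map_sub ha hv
  rw [iSup_insert, Submodule.mem_sup]
  refine ⟨v - w, ?_, w, hw, sub_add_cancel v w⟩
  simp only [LinearMap.sub_apply, LinearMap.smul_apply, Module.End.one_apply] at hwv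
  rw [Module.End.mem_eigenspace_iff, map_sub, smul_sub, sub_eq_sub_iff_sub_eq_sub, hwv]

variable (D : ℝ)

/-- The ultraspherical operator `P ↦ (1 - x²) P'' - D x P'` on polynomials. -/
def ultrasphericalOp : ℝ[X] →ₗ[ℝ] ℝ[X] :=
  LinearMap.mulLeft ℝ (1 - X ^ 2) ∘ₗ derivative ∘ₗ derivative
    - LinearMap.mulLeft ℝ (C D * X) ∘ₗ derivative

lemma ultrasphericalOp_apply (P : ℝ[X]) :
    ultrasphericalOp D P = (1 - X ^ 2) * derivative (derivative P) - C D * X * derivative P :=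
  rfl

lemma eval_ultrasphericalOp (P : ℝ[X]) (x : ℝ) : (ultrasphericalOp D P).eval x
    = (1 - x ^ 2) * (derivative (derivative P)).eval x - D * x * (derivative P).eval x := by
  simp [ultrasphericalOp_apply]

/-- The `n`-th eigenvalue `n (n + D - 1)` of minus the ultraspherical operator. -/
def gegenbauerEigenvalue (n : ℕ) : ℝ := n * (n + D - 1)

lemma gegenbauerEigenvalue_zero : gegenbauerEigenvalue D 0 = 0 := by simp [gegenbauerEigenvalue]

variable {D}

lemma strictMono_gegenbauerEigenvalue (hD : 0 < D) : StrictMono (gegenbauerEigenvalue D) := by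
  refine strictMono_nat_of_lt_succ fun n => ?_
  simp only [gegenbauerEigenvalue]
  push_cast
  nlinarith [n.cast_nonneg (α := ℝ)]

lemma gegenbauerEigenvalue_pos (hD : 0 < D) {n : ℕ} (hn : n ≠ 0) : 0 < gegenbauerEigenvalue D n :=
  gegenbauerEigenvalue_zero D ▸ strictMono_gegenbauerEigenvalue hD (Nat.pos_of_ne_zero hn)

lemma gegenbauerEigenvalue_nonneg (hD : 0 < D) (n : ℕ) : 0 ≤ gegenbauerEigenvalue D n :=
  gegenbauerEigenvalue_zero D ▸ (strictMono_gegenbauerEigenvalue hD).monotone n.zero_le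

variable (D)

lemma coeff_ultrasphericalOp (P : ℝ[X]) (n : ℕ) : (ultrasphericalOp D P).coeff n
    = (n + 2) * (n + 1) * P.coeff (n + 2) - gegenbauerEigenvalue D n * P.coeff n := by
  rw [ultrasphericalOp_apply, gegenbauerEigenvalue]
  rcases n with _ | _ | n <;>
    simp [sub_mul, mul_assoc, coeff_X_pow_mul', coeff_derivative, coeff_X_mul] <;> ring

lemma ultrasphericalOp_X_pow_add_two (n : ℕ) : ultrasphericalOp D (X ^ (n + 2))
    = ((n + 2) * (n + 1) : ℝ) • X ^ n - gegenbauerEigenvalue D (n + 2) • X ^ (n + 2) := by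
  ext k
  rw [coeff_ultrasphericalOp, coeff_sub, coeff_smul, coeff_smul, coeff_X_pow, coeff_X_pow,
    coeff_X_pow]
  by_cases hk : k = n
  · simp [hk]
  · by_cases hk' : k = n + 2 <;> simp [hk, hk']

lemma ultrasphericalOp_X_pow_of_lt_two {n : ℕ} (hn : n < 2) :
    ultrasphericalOp D (X ^ n) = -gegenbauerEigenvalue D n • X ^ n := by
  interval_cases n <;> simp [ultrasphericalOp_apply, gegenbauerEigenvalue, smul_eq_C_mul]

variable {D}

lemma eq_C_of_ultrasphericalOp_eq_zero (hD : 0 < D) {P : ℝ[X]} (hP : ultrasphericalOp D P = 0) :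
    P = C (P.coeff 0) := by
  refine eq_C_of_natDegree_eq_zero (by_contra fun hn => ?_)
  have leading := coeff_ultrasphericalOp D P P.natDegree
  rw [hP, coeff_zero, coeff_eq_zero_of_natDegree_lt (n := P.natDegree + 2) (by lia), mul_zero,
    zero_sub, zero_eq_neg] at leading
  rcases mul_eq_zero.1 leading with h | h
  · exact (gegenbauerEigenvalue_pos hD hn).ne' h
  · exact hn (by simp [leadingCoeff_eq_zero.1 h])

lemma X_pow_mem_iSup_eigenspace (hD : 0 < D) (n : ℕ) :
    X ^ n ∈ ⨆ a ∈ (fun j => -gegenbauerEigenvalue D j) '' Iic n,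
      Module.End.eigenspace (ultrasphericalOp D) a := by
  induction n using Nat.strong_induction_on with
  | _ n ih =>
    have hn : -gegenbauerEigenvalue D n ∉ (fun j => -gegenbauerEigenvalue D j) '' Iio n := by
      rintro ⟨j, hj, h⟩
      exact (strictMono_gegenbauerEigenvalue hD hj).ne (neg_injective h)
    rw [← Iio_insert, image_insert_eq]
    refine mem_iSup_eigenspace_insert hn ?_
    rcases lt_or_ge n 2 with h2 | h2
    · simp [ultrasphericalOp_X_pow_of_lt_two D h2]
    · obtain ⟨k, rfl⟩ := Nat.exists_eq_add_of_le' h2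
      rw [ultrasphericalOp_X_pow_add_two, neg_smul, sub_neg_eq_add, sub_add_cancel]
      refine Submodule.smul_mem _ _ (SetLike.le_def.1 (biSup_mono fun a ha => ?_) (ih k (by lia)))
      exact image_mono (Iic_subset_Iio.2 (by lia)) ha

lemma iSup_eigenspace_ultrasphericalOp (hD : 0 < D) :
    ⨆ j, Module.End.eigenspace (ultrasphericalOp D) (-gegenbauerEigenvalue D j) = ⊤ := by
  rw [eq_top_iff]
  intro P _
  induction P using Polynomial.induction_on' with
  | add P Q hP hQ => exact add_mem (hP trivial) (hQ trivial)
  | monomial n c =>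
    rw [← C_mul_X_pow_eq_monomial, ← smul_eq_C_mul]
    refine Submodule.smul_mem _ _ (SetLike.le_def.1 (iSup₂_le ?_) (X_pow_mem_iSup_eigenspace hD n))
    rintro _ ⟨j, _, rfl⟩
    exact le_iSup
      (fun j => Module.End.eigenspace (ultrasphericalOp D) (-gegenbauerEigenvalue D j)) j

end SpectralDecomposition

section EvenPolynomials

/-- The even part `(P(x) + P(-x)) / 2` of a polynomial, as a linear map. -/
def evenPart : ℝ[X] →ₗ[ℝ] ℝ[X] where
  toFun P := (2⁻¹ : ℝ) • (P + P.comp (-X))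
  map_add' P Q := by rw [add_comp]; module
  map_smul' c P := by rw [smul_comp, RingHom.id_apply]; module

lemma evenPart_apply (P : ℝ[X]) : evenPart P = (2⁻¹ : ℝ) • (P + P.comp (-X)) := rfl

lemma evenPart_comp_neg_X (P : ℝ[X]) : (evenPart P).comp (-X) = evenPart P := by
  simp only [evenPart_apply, smul_comp, add_comp, comp_neg_X_comp_neg_X, add_comm]

lemma evenPart_eq_self {P : ℝ[X]} (hP : P.comp (-X) = P) : evenPart P = P := by
  rw [evenPart_apply, hP]
  module

lemma exists_derivative_eq_X_mul {P : ℝ[X]} (hP : P.comp (-X) = P) :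
    ∃ R : ℝ[X], derivative P = X * R := by
  have odd : -(derivative P).eval 0 = (derivative P).eval 0 := by
    have := congrArg (fun Q => (derivative Q).eval 0) hP
    simpa [derivative_comp] using this
  refine X_dvd_iff.2 ?_
  rw [coeff_zero_eq_eval_zero]
  linarith

lemma ultrasphericalOp_comp_neg_X (D : ℝ) (P : ℝ[X]) :
    ultrasphericalOp D (P.comp (-X)) = (ultrasphericalOp D P).comp (-X) := by
  simp only [ultrasphericalOp_apply, derivative_comp, derivative_mul, derivative_neg, derivative_X,
    derivative_one, sub_comp, mul_comp, one_comp, pow_comp, X_comp, C_comp, neg_sq]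
  ring

lemma evenPart_ultrasphericalOp (D : ℝ) (P : ℝ[X]) :
    evenPart (ultrasphericalOp D P) = ultrasphericalOp D (evenPart P) := by
  simp only [evenPart_apply, map_smul, map_add, ultrasphericalOp_comp_neg_X]

lemma exists_even_eigenvector_decomposition {D : ℝ} (hD : 0 < D) {P : ℝ[X]}
    (hP : P.comp (-X) = P) : ∃ Q : ℕ →₀ ℝ[X],
      (∀ j, ultrasphericalOp D (Q j) = -gegenbauerEigenvalue D j • Q j) ∧
      (∀ j, (Q j).comp (-X) = Q j) ∧ Q.sum (fun _ q => q) = P := by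
  obtain ⟨Q, hQ, rfl⟩ := (Submodule.mem_iSup_iff_exists_finsupp _ P).1
    (iSup_eigenspace_ultrasphericalOp hD ▸ Submodule.mem_top)
  refine ⟨Q.mapRange evenPart (map_zero _), fun j => ?_, fun j => evenPart_comp_neg_X _, ?_⟩
  · rw [Finsupp.mapRange_apply, ← evenPart_ultrasphericalOp, Module.End.mem_eigenspace_iff.1 (hQ j),
      map_smul]
  · rw [Finsupp.sum_mapRange_index fun _ => rfl, ← evenPart_eq_self hP, map_finsuppSum]

end EvenPolynomials

section HeatFlow

variable {D : ℝ} {Q : ℕ →₀ ℝ[X]}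

variable (D Q) in
/-- The heat flow `e^(tL)` of the ultraspherical operator `L`, started from the sum of the
eigenvectors `Q j` and parametrized by `s = e^(-t) ∈ [0, 1]`: the initial datum is at `s = 1`, the
equilibrium at `s = 0`. -/
def heatFlow (s : ℝ) : ℝ[X] := Q.sum fun j q => s ^ gegenbauerEigenvalue D j • q

lemma heatFlow_one : heatFlow D Q 1 = Q.sum fun _ q => q := by
  simp [heatFlow]

lemma heatFlow_zero (hD : 0 < D) : heatFlow D Q 0 = Q 0 := by
  have decays : ∀ j, Q j ≠ 0 → j ≠ 0 → (0 : ℝ) ^ gegenbauerEigenvalue D j • Q j = 0 :=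
    fun j _ hj => by rw [zero_rpow (gegenbauerEigenvalue_pos hD hj).ne', zero_smul]
  rw [heatFlow, Finsupp.sum_eq_single 0 decays fun _ => smul_zero _, gegenbauerEigenvalue_zero,
    rpow_zero, one_smul]

lemma heatFlow_comp_neg_X (hQ : ∀ j, (Q j).comp (-X) = Q j) (s : ℝ) :
    (heatFlow D Q s).comp (-X) = heatFlow D Q s := by
  simp only [heatFlow, Finsupp.sum, Polynomial.sum_comp, smul_comp, hQ]

lemma eval_map_heatFlow (T : ℝ[X] →ₗ[ℝ] ℝ[X]) (s x : ℝ) : (T (heatFlow D Q s)).eval x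
    = ∑ j ∈ Q.support, s ^ gegenbauerEigenvalue D j * (T (Q j)).eval x := by
  simp only [heatFlow, Finsupp.sum, map_sum, map_smul, eval_finsetSum, eval_smul, smul_eq_mul]

lemma continuous_eval_map_heatFlow (hD : 0 < D) (T : ℝ[X] →ₗ[ℝ] ℝ[X]) :
    Continuous fun z : ℝ × ℝ => (T (heatFlow D Q z.1)).eval z.2 := by
  simp only [eval_map_heatFlow]
  exact continuous_finsetSum _ fun j _ => (continuous_fst.rpow_const fun _ =>
    Or.inr (gegenbauerEigenvalue_nonneg hD j)).mul ((T (Q j)).continuous.comp continuous_snd)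

lemma hasDerivAt_eval_map_heatFlow
    (hQ : ∀ j, ultrasphericalOp D (Q j) = -gegenbauerEigenvalue D j • Q j)
    (T : ℝ[X] →ₗ[ℝ] ℝ[X]) (x : ℝ) {s : ℝ} (hs : 0 < s) :
    HasDerivAt (fun s => (T (heatFlow D Q s)).eval x)
      (-s⁻¹ * (T (ultrasphericalOp D (heatFlow D Q s))).eval x) s := by
  rw [← LinearMap.comp_apply, eval_map_heatFlow, Finset.mul_sum]
  simp only [eval_map_heatFlow]
  refine HasDerivAt.fun_sum fun j _ => ?_
  refine ((hasDerivAt_rpow_const (Or.inl hs.ne')).mul_const ((T (Q j)).eval x)).congr_deriv ?_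
  rw [LinearMap.comp_apply, hQ, map_smul, eval_smul, smul_eq_mul, rpow_sub_one hs.ne']
  field_simp

lemma integral_eval_eq_zero_of_eigenvector (hD : 0 < D) {P : ℝ[X]} {a : ℝ} (ha : a ≠ 0)
    (hP : ultrasphericalOp D P = a • P) : ∫ x, P.eval x ∂ultrasphericalMeasure D = 0 := by
  have by_parts := integral_ultraspherical_mul hD
    (fun x _ => (derivative P).hasDerivWithinAt x _) (derivative (derivative P)).continuousOn
    (fun x _ => hasDerivWithinAt_const x _ (1 : ℝ)) continuousOn_const
  simp only [← eval_ultrasphericalOp, hP, eval_smul, smul_eq_mul, mul_one, mul_zero, neg_zero,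
    integral_const_mul, integral_zero] at by_parts
  exact (mul_eq_zero.1 by_parts).resolve_left ha

lemma heatFlow_zero_eq_C_integral (hD : 0 < D)
    (hQ : ∀ j, ultrasphericalOp D (Q j) = -gegenbauerEigenvalue D j • Q j) :
    heatFlow D Q 0 = C (∫ x, (heatFlow D Q 1).eval x ∂ultrasphericalMeasure D) := by
  have := isProbabilityMeasure_ultrasphericalMeasure hD
  have hQ0 : Q 0 = C ((Q 0).coeff 0) := eq_C_of_ultrasphericalOp_eq_zero hD (by
    rw [hQ, gegenbauerEigenvalue_zero, neg_zero, zero_smul])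
  have mean_vanishes : ∀ j ≠ 0, ∫ x, (Q j).eval x ∂ultrasphericalMeasure D = 0 := fun j hj =>
    integral_eval_eq_zero_of_eigenvector hD (neg_ne_zero.2 (gegenbauerEigenvalue_pos hD hj).ne')
      (hQ j)
  have mean : ∫ x, (heatFlow D Q 1).eval x ∂ultrasphericalMeasure D = (Q 0).coeff 0 := by
    simp only [heatFlow_one, Finsupp.sum, eval_finsetSum]
    rw [integral_finsetSum _ fun j _ => integrable_of_continuousOn hD (Q j).continuousOn,
      Finset.sum_eq_single 0 (fun j _ => mean_vanishes j) fun h => by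
        simp [Finsupp.notMem_support_iff.1 h], hQ0]
    simp
  rw [heatFlow_zero hD, mean, ← hQ0]

end HeatFlow

section MaximumPrinciple

lemma deriv_deriv_nonneg_of_isLocalMin {f : ℝ → ℝ} {x : ℝ} (h : IsLocalMin f x)
    (hf : ContinuousAt f x) : 0 ≤ deriv (deriv f) x := by
  by_contra! hneg
  have hmax := isLocalMax_of_deriv_deriv_neg hneg h.deriv_eq_zero hf
  have hconst : f =ᶠ[𝓝 x] fun _ => f x := (hmax.and h).mono fun _ hy => le_antisymm hy.1 hy.2
  exact hneg.ne (by simpa using hconst.deriv.deriv_eq)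

variable {D : ℝ}

lemma eval_ultrasphericalOp_nonneg_of_isMinOn (hD : 0 < D) {P : ℝ[X]} {x : ℝ}
    (hx : x ∈ Icc (-1 : ℝ) 1) (hmin : IsMinOn (fun y => P.eval y) (Icc (-1) 1) x) :
    0 ≤ (ultrasphericalOp D P).eval x := by
  have first_order : 0 ≤ (derivative P).eval x * (0 - x) := by
    have := hmin.localize.hasFDerivWithinAt_nonneg (P.hasDerivAt x).hasFDerivAt.hasFDerivWithinAt
      (sub_mem_posTangentConeAt_of_segment_subset
        ((convex_Icc (-1 : ℝ) 1).segment_subset hx (by simp : (0 : ℝ) ∈ Icc (-1 : ℝ) 1)))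
    simpa [mul_comm] using this
  have second_order : 0 ≤ (1 - x ^ 2) * (derivative (derivative P)).eval x := by
    rcases (one_sub_sq_nonneg hx).eq_or_lt with h | h
    · rw [← h, zero_mul]
    · have hnhds : Icc (-1 : ℝ) 1 ∈ 𝓝 x := Icc_mem_nhds (by nlinarith) (by nlinarith)
      have := deriv_deriv_nonneg_of_isLocalMin (hmin.isLocalMin hnhds) P.continuous.continuousAt
      rw [funext fun y => P.deriv (x := y), Polynomial.deriv] at this
      exact mul_nonneg h.le this
  rw [eval_ultrasphericalOp]
  linarith [mul_nonneg hD.le first_order]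

lemma le_eval_heatFlow (hD : 0 < D) {Q : ℕ →₀ ℝ[X]}
    (hQ : ∀ j, ultrasphericalOp D (Q j) = -gegenbauerEigenvalue D j • Q j) {m : ℝ}
    (hm : ∀ x ∈ Icc (-1 : ℝ) 1, m ≤ (heatFlow D Q 1).eval x) {s x : ℝ}
    (hs : s ∈ Icc (0 : ℝ) 1) (hx : x ∈ Icc (-1 : ℝ) 1) : m ≤ (heatFlow D Q s).eval x := by
  have := isProbabilityMeasure_ultrasphericalMeasure hD
  refine le_of_forall_pos_le_add fun ε hε => ?_
  obtain ⟨⟨s₀, x₀⟩, ⟨hs₀, hx₀⟩, hmin⟩ := (isCompact_Icc.prod isCompact_Icc).exists_isMinOn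
    (⟨(s, x), hs, hx⟩ : (Icc (0 : ℝ) 1 ×ˢ Icc (-1 : ℝ) 1).Nonempty)
    ((continuous_eval_map_heatFlow (Q := Q) hD LinearMap.id).add
      ((continuous_const (y := ε)).mul (continuous_const.sub continuous_fst))).continuousOn
  have hmin' : ∀ s ∈ Icc (0 : ℝ) 1, ∀ x ∈ Icc (-1 : ℝ) 1,
      (heatFlow D Q s₀).eval x₀ + ε * (1 - s₀) ≤ (heatFlow D Q s).eval x + ε * (1 - s) :=
    fun s hs x hx => isMinOn_iff.1 hmin (s, x) ⟨hs, hx⟩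
  suffices m ≤ (heatFlow D Q s₀).eval x₀ + ε * (1 - s₀) by
    nlinarith [hmin' s hs x hx, mul_nonneg hε.le hs.1]
  rcases hs₀.1.eq_or_lt with rfl | hs₀_pos
  · rw [heatFlow_zero_eq_C_integral hD hQ, eval_C]
    have : ∫ _, m ∂ultrasphericalMeasure D
        ≤ ∫ x, (heatFlow D Q 1).eval x ∂ultrasphericalMeasure D :=
      integral_mono_ae (integrable_const m)
        (integrable_of_continuousOn hD (heatFlow D Q 1).continuousOn) (ae_mem_Icc.mono hm)
    simp only [integral_const, probReal_univ, one_smul] at this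
    linarith
  rcases hs₀.2.eq_or_lt with rfl | hs₀_lt
  · linarith [hm x₀ hx₀]
  have time_derivative := (hasDerivAt_eval_map_heatFlow hQ LinearMap.id x₀ hs₀_pos).add
    (((hasDerivAt_id s₀).const_sub 1).const_mul ε)
  have critical := IsLocalMin.hasDerivAt_eq_zero
    (eventually_of_mem (Icc_mem_nhds hs₀_pos hs₀_lt) fun s hs => hmin' s hs x₀ hx₀) time_derivative
  have space_min := eval_ultrasphericalOp_nonneg_of_isMinOn hD hx₀ (P := heatFlow D Q s₀)
    fun x hx => by simpa using hmin' s₀ hs₀ x hx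
  simp only [LinearMap.id_apply] at critical
  nlinarith [mul_nonneg (inv_nonneg.2 hs₀.1) space_min]

end MaximumPrinciple

section PowerDifferentials

/-- The differential of `a ↦ a ^ r` at `a` in the direction `b`. -/
def rpowDeriv (r a b : ℝ) : ℝ := r * (a ^ (r - 1) * b)

/-- The derivative of `rpowDeriv r a b` when `a` and `b` move with velocities `a'` and `b'`. -/
def rpowDeriv₂ (r a a' b b' : ℝ) : ℝ := r * ((r - 1) * a ^ (r - 2) * a' * b + a ^ (r - 1) * b')

variable {r : ℝ} {f f' g g' : ℝ → ℝ} {S : Set ℝ} {x : ℝ}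

lemma hasDerivWithinAt_rpow {y : ℝ} (hf : HasDerivWithinAt f y S x) (h0 : 0 < f x) :
    HasDerivWithinAt (fun x => f x ^ r) (rpowDeriv r (f x) y) S x := by
  refine (hf.rpow_const (p := r) (Or.inl h0.ne')).congr_deriv ?_
  rw [rpowDeriv]
  ring

lemma hasDerivWithinAt_rpowDeriv {y z : ℝ} (hf : HasDerivWithinAt f y S x)
    (hg : HasDerivWithinAt g z S x) (h0 : 0 < f x) :
    HasDerivWithinAt (fun x => rpowDeriv r (f x) (g x)) (rpowDeriv₂ r (f x) y (g x) z) S x := by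
  refine ((((hasDerivWithinAt_rpow (r := r - 1) hf h0).mul hg)).const_mul r).congr_deriv ?_
  rw [rpowDeriv, rpowDeriv₂, show r - 1 - 1 = r - 2 by ring]
  ring

variable {X : Type*} [TopologicalSpace X] {S : Set X}

lemma continuousOn_rpowDeriv {f g : X → ℝ} (hf : ContinuousOn f S) (hg : ContinuousOn g S)
    (h0 : ∀ x ∈ S, 0 < f x) : ContinuousOn (fun x => rpowDeriv r (f x) (g x)) S :=
  ((hf.rpow_const fun x hx => Or.inl (h0 x hx).ne').mul hg).const_mul r

lemma continuousOn_rpowDeriv₂ {f f' g g' : X → ℝ} (hf : ContinuousOn f S)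
    (hf' : ContinuousOn f' S) (hg : ContinuousOn g S) (hg' : ContinuousOn g' S)
    (h0 : ∀ x ∈ S, 0 < f x) :
    ContinuousOn (fun x => rpowDeriv₂ r (f x) (f' x) (g x) (g' x)) S := by
  have h0' : ∀ q : ℝ, ∀ x ∈ S, f x ≠ 0 ∨ 0 ≤ q := fun _ x hx => Or.inl (h0 x hx).ne'
  exact (((((hf.rpow_const (h0' _)).const_mul _).mul hf').mul hg).add
    ((hf.rpow_const (h0' _)).mul hg')).const_mul r

end PowerDifferentials

section EnergyAlongFlow

variable {D p κ : ℝ}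

variable (D κ) in
/-- Half the time derivative of the energy density of `ρ ^ r` at the point `x`, when `ρ` evolves by
`∂ₜ ρ = L ρ` from the polynomial `P`. -/
def dissipationDensity (r : ℝ) (P : ℝ[X]) (x : ℝ) : ℝ :=
  (1 - x ^ 2) * rpowDeriv r (P.eval x) ((derivative P).eval x)
      * rpowDeriv₂ r (P.eval x) ((derivative P).eval x) ((ultrasphericalOp D P).eval x)
          ((derivative (ultrasphericalOp D P)).eval x)
    + κ * (P.eval x ^ r * rpowDeriv r (P.eval x) ((ultrasphericalOp D P).eval x))

lemma polynomial_dissipation_nonpos (hD : 0 < D) (hp : 1 ≤ p)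
    (hα : (p - 1) * (D - 1) ^ 2 ≤ D * (D + 2))
    (hκ : κ * (p - 2) = D + (1 - (p - 1) * (D - 1) ^ 2 / (D * (D + 2))) * (D + 2))
    {P : ℝ[X]} (heven : P.comp (-X) = P) (hP : ∀ x ∈ Icc (-1 : ℝ) 1, 0 < P.eval x) :
    ∫ x, dissipationDensity D κ (1 / p) P x ∂ultrasphericalMeasure D ≤ 0 := by
  obtain ⟨R, hR⟩ := exists_derivative_eq_X_mul heven
  have hderiv : ∀ (Q : ℝ[X]) (x : ℝ),
      HasDerivWithinAt (fun x => Q.eval x) ((derivative Q).eval x) (Icc (-1) 1) x :=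
    fun Q x => Q.hasDerivWithinAt x _
  have hcont : ∀ Q : ℝ[X], ContinuousOn (fun x => Q.eval x) (Icc (-1) 1) :=
    fun Q => Q.continuousOn
  have hu' : ∀ x ∈ Icc (-1 : ℝ) 1, HasDerivWithinAt
      (fun x => rpowDeriv (1 / p) (P.eval x) ((derivative P).eval x)) _ (Icc (-1) 1) x :=
    fun x hx => hasDerivWithinAt_rpowDeriv (hderiv P x) (hderiv (derivative P) x) (hP x hx)
  have cont₂ : ∀ Q : ℝ[X], ContinuousOn (fun x => rpowDeriv₂ (1 / p) (P.eval x)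
      ((derivative P).eval x) (Q.eval x) ((derivative Q).eval x)) (Icc (-1) 1) :=
    fun Q => continuousOn_rpowDeriv₂ (hcont _) (hcont _) (hcont _) (hcont _) hP
  have poincare := integral_deriv_sq_le_of_deriv_eq_mul hD
    (fun x hx => hasDerivWithinAt_rpowDeriv (r := 1 / p) (hderiv P x) (hderiv R x) (hP x hx))
    (cont₂ R) (fun x _ => by rw [hR, eval_mul, eval_X, rpowDeriv, rpowDeriv]; ring) hu'
  refine dissipation_nonpos hD hp hα hκ (fun x hx => (rpow_pos_of_pos (hP x hx) _).ne')
    (fun x hx => hasDerivWithinAt_rpow (hderiv P x) (hP x hx)) hu' (cont₂ _) poincare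
    (fun x hx => hasDerivWithinAt_rpowDeriv (hderiv P x) (hderiv _ x) (hP x hx)) (cont₂ _)
    fun x hx => ?_
  have := hP x hx
  have := rpow_pos_of_pos this (1 / p)
  rw [eval_ultrasphericalOp, rpowDeriv, rpowDeriv, rpowDeriv₂, rpow_sub_one (hP x hx).ne',
    rpow_sub (hP x hx), rpow_two]
  field_simp
  ring

/-- The integrand `ν u'² + κ u²` at the point `x`, for `u = ρ ^ r`, as a function of
`(ρ, ρ', x)`. -/
def energyDensity (κ r : ℝ) (z : ℝ × ℝ × ℝ) : ℝ :=
  (1 - z.2.2 ^ 2) * rpowDeriv r z.1 z.2.1 ^ 2 + κ * (z.1 ^ r) ^ 2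

lemma continuousOn_energyDensity (κ r : ℝ) : ContinuousOn (energyDensity κ r) {z | 0 < z.1} := by
  have hpow : ContinuousOn (fun z : ℝ × ℝ × ℝ => z.1 ^ r) {z | 0 < z.1} :=
    continuousOn_fst.rpow_const fun z hz => Or.inl (ne_of_gt hz)
  have hderiv : ContinuousOn (fun z : ℝ × ℝ × ℝ => rpowDeriv r z.1 z.2.1) {z | 0 < z.1} :=
    continuousOn_rpowDeriv (by fun_prop) (by fun_prop) fun _ hz => hz
  unfold energyDensity
  fun_prop

lemma hasDerivAt_energyDensity {r x s a' b' : ℝ} {a b : ℝ → ℝ} (ha : HasDerivAt a a' s)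
    (hb : HasDerivAt b b' s) (h0 : 0 < a s) :
    HasDerivAt (fun s => energyDensity κ r (a s, b s, x))
      (2 * ((1 - x ^ 2) * rpowDeriv r (a s) (b s) * rpowDeriv₂ r (a s) a' (b s) b'
        + κ * (a s ^ r * rpowDeriv r (a s) a'))) s := by
  rw [← hasDerivWithinAt_univ] at *
  refine ((((hasDerivWithinAt_rpowDeriv ha hb h0).pow 2).const_mul (1 - x ^ 2)).add
    (((hasDerivWithinAt_rpow ha h0).pow 2).const_mul κ)).congr_deriv ?_
  ring

variable {Q : ℕ →₀ ℝ[X]}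

lemma hasDerivAt_energyDensity_heatFlow
    (hQ : ∀ j, ultrasphericalOp D (Q j) = -gegenbauerEigenvalue D j • Q j) {r s x : ℝ} (hs : 0 < s)
    (h0 : 0 < (heatFlow D Q s).eval x) :
    HasDerivAt
      (fun s => energyDensity κ r
        ((heatFlow D Q s).eval x, (derivative (heatFlow D Q s)).eval x, x))
      (-(2 * s⁻¹) * dissipationDensity D κ r (heatFlow D Q s) x) s := by
  refine (hasDerivAt_energyDensity (hasDerivAt_eval_map_heatFlow hQ LinearMap.id x hs)
    (hasDerivAt_eval_map_heatFlow hQ derivative x hs) h0).congr_deriv ?_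
  simp only [dissipationDensity, rpowDeriv, rpowDeriv₂, LinearMap.id_apply]
  ring

lemma continuousOn_energyDensity_heatFlow (hD : 0 < D) (r : ℝ) : ContinuousOn
    (fun z : ℝ × ℝ => energyDensity κ r
      ((heatFlow D Q z.1).eval z.2, (derivative (heatFlow D Q z.1)).eval z.2, z.2))
    {z | 0 < (heatFlow D Q z.1).eval z.2} :=
  (continuousOn_energyDensity κ r).comp
    ((continuous_eval_map_heatFlow hD LinearMap.id).prodMk
      ((continuous_eval_map_heatFlow hD derivative).prodMk continuous_snd)).continuousOn
    fun _ hz => hz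

lemma continuousOn_dissipationDensity_heatFlow (hD : 0 < D) (r : ℝ) : ContinuousOn
    (fun z : ℝ × ℝ => dissipationDensity D κ r (heatFlow D Q z.1) z.2)
    {z | 0 < (heatFlow D Q z.1).eval z.2} := by
  have c : ∀ (T : ℝ[X] →ₗ[ℝ] ℝ[X]) (S : Set (ℝ × ℝ)),
      ContinuousOn (fun z : ℝ × ℝ => (T (heatFlow D Q z.1)).eval z.2) S :=
    fun T S => (continuous_eval_map_heatFlow hD T).continuousOn
  have cρ := c LinearMap.id {z | 0 < (heatFlow D Q z.1).eval z.2}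
  have cρ' := c derivative {z | 0 < (heatFlow D Q z.1).eval z.2}
  have cLρ := c (ultrasphericalOp D) {z | 0 < (heatFlow D Q z.1).eval z.2}
  have cLρ' := c (derivative ∘ₗ ultrasphericalOp D) {z | 0 < (heatFlow D Q z.1).eval z.2}
  have weight : Continuous fun z : ℝ × ℝ => 1 - z.2 ^ 2 := by fun_prop
  exact ((weight.continuousOn.mul (continuousOn_rpowDeriv cρ cρ' fun _ hz => hz)).mul
    (continuousOn_rpowDeriv₂ cρ cρ' cLρ cLρ' fun _ hz => hz)).add
    (((cρ.rpow_const fun _ hz => Or.inl (ne_of_gt hz)).mul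
      (continuousOn_rpowDeriv cρ cLρ fun _ hz => hz)).const_mul κ)

lemma monotoneOn_integral_energyDensity_heatFlow (hD : 0 < D) (hp : 1 ≤ p)
    (hα : (p - 1) * (D - 1) ^ 2 ≤ D * (D + 2))
    (hκ : κ * (p - 2) = D + (1 - (p - 1) * (D - 1) ^ 2 / (D * (D + 2))) * (D + 2))
    (hQ : ∀ j, ultrasphericalOp D (Q j) = -gegenbauerEigenvalue D j • Q j)
    (hQeven : ∀ j, (Q j).comp (-X) = Q j)
    (hpos : ∀ s ∈ Icc (0 : ℝ) 1, ∀ x ∈ Icc (-1 : ℝ) 1, 0 < (heatFlow D Q s).eval x) :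
    MonotoneOn (fun s => ∫ x, energyDensity κ (1 / p)
      ((heatFlow D Q s).eval x, (derivative (heatFlow D Q s)).eval x, x) ∂ultrasphericalMeasure D)
      (Icc 0 1) := by
  have := isProbabilityMeasure_ultrasphericalMeasure hD
  have cE := (continuousOn_energyDensity_heatFlow (κ := κ) (Q := Q) hD (1 / p)).mono
    (fun z hz => hpos z.1 hz.1 z.2 hz.2 : Icc (0 : ℝ) 1 ×ˢ Icc (-1 : ℝ) 1 ⊆ _)
  have cE' : ContinuousOn (fun z : ℝ × ℝ =>
      -(2 * z.1⁻¹) * dissipationDensity D κ (1 / p) (heatFlow D Q z.1) z.2)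
      (Ioo (0 : ℝ) 1 ×ˢ Icc (-1 : ℝ) 1) :=
    ((continuousOn_fst.inv₀ fun z hz => hz.1.1.ne').const_mul 2).neg.mul
      ((continuousOn_dissipationDensity_heatFlow hD (1 / p)).mono
        fun z hz => hpos z.1 (Ioo_subset_Icc_self hz.1) z.2 hz.2)
  refine monotoneOn_of_hasDerivWithinAt_nonneg (convex_Icc 0 1)
    (continuousOn_integral_of_ae_mem isCompact_Icc ae_mem_Icc isCompact_Icc cE)
    (f' := fun s => ∫ x, -(2 * s⁻¹) * dissipationDensity D κ (1 / p) (heatFlow D Q s) x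
      ∂ultrasphericalMeasure D) ?_ ?_ <;> rw [interior_Icc] <;> intro s hs
  · refine (hasDerivAt_integral_of_ae_mem isCompact_Icc ae_mem_Icc isOpen_Ioo
      (fun s hs => cE.comp (by fun_prop : ContinuousOn (fun x : ℝ => (s, x)) _)
        fun x hx => ⟨Ioo_subset_Icc_self hs, hx⟩)
      (F' := fun s x => -(2 * s⁻¹) * dissipationDensity D κ (1 / p) (heatFlow D Q s) x)
      cE' (fun s hs x hx => ?_) hs).hasDerivWithinAt
    exact hasDerivAt_energyDensity_heatFlow hQ hs.1 (hpos s (Ioo_subset_Icc_self hs) x hx)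
  · rw [integral_const_mul, neg_mul, ← mul_neg]
    refine mul_nonneg (mul_nonneg zero_le_two (inv_nonneg.2 hs.1.le)) (neg_nonneg.2 ?_)
    exact polynomial_dissipation_nonpos hD hp hα hκ (heatFlow_comp_neg_X hQeven s)
      (hpos s (Ioo_subset_Icc_self hs))

lemma mul_integral_rpow_sq_le_of_even_polynomial (hD : 0 < D) (hp : 1 ≤ p)
    (hα : (p - 1) * (D - 1) ^ 2 ≤ D * (D + 2))
    (hκ : κ * (p - 2) = D + (1 - (p - 1) * (D - 1) ^ 2 / (D * (D + 2))) * (D + 2))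
    {P : ℝ[X]} (heven : P.comp (-X) = P) (hP : ∀ x ∈ Icc (-1 : ℝ) 1, 0 < P.eval x) :
    κ * ((∫ x, P.eval x ∂ultrasphericalMeasure D) ^ (1 / p)) ^ 2
      ≤ ∫ x, energyDensity κ (1 / p) (P.eval x, (derivative P).eval x, x)
          ∂ultrasphericalMeasure D := by
  have := isProbabilityMeasure_ultrasphericalMeasure hD
  obtain ⟨Q, hQ, hQeven, hQP⟩ := exists_even_eigenvector_decomposition hD heven
  rw [← heatFlow_one (D := D)] at hQP
  obtain ⟨x₀, hx₀, hmin⟩ := isCompact_Icc.exists_isMinOn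
    (nonempty_Icc.2 (by norm_num : (-1 : ℝ) ≤ 1)) P.continuousOn
  have hpos : ∀ s ∈ Icc (0 : ℝ) 1, ∀ x ∈ Icc (-1 : ℝ) 1, 0 < (heatFlow D Q s).eval x :=
    fun s hs x hx => (hP x₀ hx₀).trans_le
      (le_eval_heatFlow hD hQ (by rw [hQP]; exact isMinOn_iff.1 hmin) hs hx)
  have energy_le := monotoneOn_integral_energyDensity_heatFlow hD hp hα hκ hQ hQeven hpos
    (left_mem_Icc.2 zero_le_one) (right_mem_Icc.2 zero_le_one) zero_le_one
  simpa [heatFlow_zero_eq_C_integral hD hQ, hQP, energyDensity, rpowDeriv] using energy_le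

end EnergyAlongFlow

section Density

lemma exists_derivative_eq {F : Type*} [Field F] [CharZero F] (P : F[X]) :
    ∃ S : F[X], derivative S = P := by
  induction P using Polynomial.induction_on' with
  | add P₁ P₂ h₁ h₂ =>
    obtain ⟨S₁, rfl⟩ := h₁
    obtain ⟨S₂, rfl⟩ := h₂
    exact ⟨S₁ + S₂, derivative_add⟩
  | monomial n a =>
    refine ⟨monomial (n + 1) (a / (n + 1)), ?_⟩
    rw [derivative_monomial, Nat.add_sub_cancel, Nat.cast_succ, div_mul_cancel₀]
    exact n.cast_add_one_ne_zero

variable {g g' : ℝ → ℝ}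

lemma exists_polynomial_near_with_derivative {a b : ℝ} (hab : a ≤ b)
    (hg : ∀ x ∈ Icc a b, HasDerivWithinAt g (g' x) (Icc a b) x) (hg' : ContinuousOn g' (Icc a b))
    {δ : ℝ} (hδ : 0 < δ) : ∃ P : ℝ[X], ∀ x ∈ Icc a b,
      |P.eval x - g x| ≤ δ ∧ |(derivative P).eval x - g' x| ≤ δ := by
  have hlen : 0 < b - a + 1 := by linarith
  obtain ⟨q, hq⟩ := exists_polynomial_near_of_continuousOn a b g' hg' (δ / (b - a + 1))
    (div_pos hδ hlen)
  obtain ⟨S, rfl⟩ := exists_derivative_eq q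
  refine ⟨S + C (g a - S.eval a), fun x hx => ⟨?_, ?_⟩⟩
  · have mean_value := (convex_Icc a b).norm_image_sub_le_of_norm_hasDerivWithin_le
      (fun y hy => (S.hasDerivWithinAt y _).sub (hg y hy)) (fun y hy => (hq y hy).le)
      (left_mem_Icc.2 hab) hx
    simp only [Pi.sub_apply, norm_eq_abs, abs_of_nonneg (sub_nonneg.2 hx.1)] at mean_value
    calc |(S + C (g a - S.eval a)).eval x - g x| = |S.eval x - g x - (S.eval a - g a)| := by
          rw [eval_add, eval_C]; ring_nf
      _ ≤ δ / (b - a + 1) * (x - a) := mean_value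
      _ ≤ δ := by
          rw [div_mul_eq_mul_div, div_le_iff₀ hlen]
          nlinarith [hx.2]
  · rw [derivative_add, derivative_C, add_zero]
    exact (hq x hx).le.trans (div_le_self hδ.le (by linarith))

lemma derivWithin_odd_of_even {s : Set ℝ} (hs : UniqueDiffOn ℝ s) (hneg : ∀ x ∈ s, -x ∈ s)
    (hg : ∀ x ∈ s, HasDerivWithinAt g (g' x) s x) (heven : ∀ x ∈ s, g (-x) = g x) {x : ℝ}
    (hx : x ∈ s) : g' (-x) = -g' x := by
  have reflected := ((hg (-x) (hneg x hx)).comp x (hasDerivWithinAt_neg x s) hneg).congr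
    (fun y hy => (heven y hy).symm) (heven x hx).symm
  linarith [(hs x hx).eq_deriv s reflected (hg x hx)]

lemma exists_even_polynomial_near_with_derivative
    (hg : ∀ x ∈ Icc (-1 : ℝ) 1, HasDerivWithinAt g (g' x) (Icc (-1) 1) x)
    (hg' : ContinuousOn g' (Icc (-1) 1)) (heven : ∀ x ∈ Icc (-1 : ℝ) 1, g (-x) = g x)
    {δ : ℝ} (hδ : 0 < δ) : ∃ P : ℝ[X], P.comp (-X) = P ∧ ∀ x ∈ Icc (-1 : ℝ) 1,
      |P.eval x - g x| ≤ δ ∧ |(derivative P).eval x - g' x| ≤ δ := by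
  obtain ⟨P, hP⟩ := exists_polynomial_near_with_derivative (by norm_num) hg hg' hδ
  have hneg : ∀ x ∈ Icc (-1 : ℝ) 1, -x ∈ Icc (-1 : ℝ) 1 :=
    fun x hx => ⟨neg_le_neg hx.2, neg_le.1 hx.1⟩
  refine ⟨evenPart P, evenPart_comp_neg_X P, fun x hx => ?_⟩
  obtain ⟨h, h'⟩ := hP x hx
  obtain ⟨hn, hn'⟩ := hP (-x) (hneg x hx)
  rw [heven x hx] at hn
  rw [derivWithin_odd_of_even (uniqueDiffOn_Icc (by norm_num)) hneg hg heven hx] at hn'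
  simp only [evenPart_apply, derivative_smul, derivative_add, derivative_comp, derivative_neg,
    derivative_X, eval_smul, eval_add, eval_comp, eval_mul, eval_neg, eval_X, eval_one, smul_eq_mul]
  constructor <;> rw [abs_le] at * <;> constructor <;> linarith

lemma exists_even_polynomial_tendstoUniformlyOn
    (hg : ∀ x ∈ Icc (-1 : ℝ) 1, HasDerivWithinAt g (g' x) (Icc (-1) 1) x)
    (hg' : ContinuousOn g' (Icc (-1) 1)) (heven : ∀ x ∈ Icc (-1 : ℝ) 1, g (-x) = g x) :
    ∃ P : ℕ → ℝ[X], (∀ n, (P n).comp (-X) = P n) ∧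
      TendstoUniformlyOn (fun n x => ((P n).eval x, (derivative (P n)).eval x, x))
        (fun x => (g x, g' x, x)) atTop (Icc (-1) 1) := by
  choose P hPeven hP using fun n : ℕ =>
    exists_even_polynomial_near_with_derivative hg hg' heven (Nat.one_div_pos_of_nat (n := n))
  refine ⟨P, hPeven, Metric.tendstoUniformlyOn_iff.2 fun ε hε => ?_⟩
  filter_upwards [tendsto_one_div_add_atTop_nhds_zero_nat.eventually_lt_const hε] with n hn x hx
  rw [dist_comm, Prod.dist_eq, Prod.dist_eq, dist_self, Real.dist_eq, Real.dist_eq]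
  exact max_lt ((hP n x hx).1.trans_lt hn) (max_lt ((hP n x hx).2.trans_lt hn) hε)

variable {D p κ : ℝ}

lemma mul_integral_rpow_sq_le_of_pos (hD : 0 < D) (hp : 1 ≤ p)
    (hα : (p - 1) * (D - 1) ^ 2 ≤ D * (D + 2))
    (hκ : κ * (p - 2) = D + (1 - (p - 1) * (D - 1) ^ 2 / (D * (D + 2))) * (D + 2))
    (hg : ∀ x ∈ Icc (-1 : ℝ) 1, HasDerivWithinAt g (g' x) (Icc (-1) 1) x)
    (hg' : ContinuousOn g' (Icc (-1) 1)) (heven : ∀ x ∈ Icc (-1 : ℝ) 1, g (-x) = g x)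
    (hpos : ∀ x ∈ Icc (-1 : ℝ) 1, 0 < g x) :
    κ * ((∫ x, g x ∂ultrasphericalMeasure D) ^ (1 / p)) ^ 2
      ≤ ∫ x, energyDensity κ (1 / p) (g x, g' x, x) ∂ultrasphericalMeasure D := by
  have := isProbabilityMeasure_ultrasphericalMeasure hD
  have hgc : ContinuousOn g (Icc (-1) 1) := fun x hx => (hg x hx).continuousWithinAt
  obtain ⟨P, hPeven, hP⟩ := exists_even_polynomial_tendstoUniformlyOn hg hg' heven
  have hlim : ContinuousOn (fun x => (g x, g' x, x)) (Icc (-1) 1) :=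
    hgc.prodMk (hg'.prodMk continuousOn_id)
  obtain ⟨Z, hZ, hZpos, hgZ, hPZ⟩ := exists_isCompact_eventually_mapsTo isCompact_Icc
    (isOpen_lt continuous_const continuous_fst : IsOpen {z : ℝ × ℝ × ℝ | 0 < z.1}) hlim hpos hP
  have converges : ∀ {Φ : ℝ × ℝ × ℝ → ℝ}, ContinuousOn Φ Z → Tendsto
      (fun n => ∫ x, Φ ((P n).eval x, (derivative (P n)).eval x, x) ∂ultrasphericalMeasure D)
      atTop (𝓝 (∫ x, Φ (g x, g' x, x) ∂ultrasphericalMeasure D)) := fun hΦ =>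
    tendsto_integral_comp_of_ae_mem isCompact_Icc ae_mem_Icc hZ hΦ
      (Eventually.of_forall fun n => (P n).continuousOn.prodMk
        ((derivative (P n)).continuousOn.prodMk continuousOn_id)) hPZ hgZ
      fun x hx => hP.tendsto_at hx
  refine le_of_tendsto_of_tendsto ((((converges continuousOn_fst).rpow_const
    (Or.inr (by positivity))).pow 2).const_mul κ)
    (converges ((continuousOn_energyDensity κ (1 / p)).mono hZpos)) ?_
  filter_upwards [hPZ] with n hn
  exact mul_integral_rpow_sq_le_of_even_polynomial hD hp hα hκ (hPeven n)
    fun x hx => hZpos (hn hx)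

end Density

section Regularization

lemma rpowDeriv_rpow {a : ℝ} (ha : 0 < a) (r q b : ℝ) :
    rpowDeriv r (a ^ q) (rpowDeriv q a b) = rpowDeriv (r * q) a b := by
  have exponents : (a ^ q) ^ (r - 1) * a ^ (q - 1) = a ^ (r * q - 1) := by
    rw [← rpow_mul ha.le, ← rpow_add ha]
    ring_nf
  simp only [rpowDeriv, ← exponents]
  ring

lemma energyDensity_rpow {a : ℝ} (ha : 0 < a) (κ r q b x : ℝ) :
    energyDensity κ r (a ^ q, rpowDeriv q a b, x) = energyDensity κ (r * q) (a, b, x) := by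
  simp only [energyDensity, rpowDeriv_rpow ha, ← rpow_mul ha.le, mul_comm q r]

lemma energyDensity_half {a : ℝ} (ha : 0 < a) (κ b x : ℝ) :
    energyDensity κ (1 / 2) (a, b, x) = (1 - x ^ 2) * (b ^ 2 / (4 * a)) + κ * a := by
  have := sqrt_pos.2 ha
  simp only [energyDensity, rpowDeriv, rpow_sub_one ha.ne', ← sqrt_eq_rpow, mul_pow, div_pow,
    sq_sqrt ha.le]
  field_simp
  ring

lemma energyDensity_sq_add_le {x ε : ℝ} (hx : x ∈ Icc (-1 : ℝ) 1) (hε : 0 < ε) (κ y y' : ℝ) :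
    energyDensity κ (1 / 2) (y ^ 2 + ε, 2 * y * y', x)
      ≤ (1 - x ^ 2) * y' ^ 2 + κ * (y ^ 2 + ε) := by
  rw [energyDensity_half (by positivity)]
  gcongr
  · exact one_sub_sq_nonneg hx
  · rw [div_le_iff₀ (by positivity)]
    nlinarith [mul_nonneg (sq_nonneg y') hε.le]

variable {D p κ : ℝ} {f f' : ℝ → ℝ}

lemma mul_integral_sq_add_rpow_le (hD : 0 < D) (hp : 1 ≤ p)
    (hα : (p - 1) * (D - 1) ^ 2 ≤ D * (D + 2))
    (hκ : κ * (p - 2) = D + (1 - (p - 1) * (D - 1) ^ 2 / (D * (D + 2))) * (D + 2))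
    (hf : ∀ x ∈ Icc (-1 : ℝ) 1, HasDerivWithinAt f (f' x) (Icc (-1) 1) x)
    (hf' : ContinuousOn f' (Icc (-1) 1)) (heven : ∀ x ∈ Icc (-1 : ℝ) 1, f (-x) = f x)
    {ε : ℝ} (hε : 0 < ε) :
    κ * ((∫ x, (f x ^ 2 + ε) ^ (p / 2) ∂ultrasphericalMeasure D) ^ (1 / p)) ^ 2
      ≤ ∫ x, ((1 - x ^ 2) * f' x ^ 2 + κ * (f x ^ 2 + ε)) ∂ultrasphericalMeasure D := by
  have := isProbabilityMeasure_ultrasphericalMeasure hD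
  have hfc : ContinuousOn f (Icc (-1) 1) := fun x hx => (hf x hx).continuousWithinAt
  have hpos : ∀ x ∈ Icc (-1 : ℝ) 1, 0 < f x ^ 2 + ε := fun x _ => by positivity
  have hsq : ∀ x ∈ Icc (-1 : ℝ) 1,
      HasDerivWithinAt (fun x => f x ^ 2 + ε) (2 * f x * f' x) (Icc (-1) 1) x := fun x hx =>
    (((hf x hx).pow 2).add_const ε).congr_deriv (by norm_num)
  have hsqc : ContinuousOn (fun x => f x ^ 2 + ε) (Icc (-1) 1) := by fun_prop
  have hgc : ContinuousOn (fun x => (f x ^ 2 + ε) ^ (p / 2)) (Icc (-1) 1) :=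
    hsqc.rpow_const fun x hx => Or.inl (hpos x hx).ne'
  have hgc' : ContinuousOn (fun x => rpowDeriv (p / 2) (f x ^ 2 + ε) (2 * f x * f' x))
      (Icc (-1) 1) := continuousOn_rpowDeriv hsqc (by fun_prop) hpos
  have hgpos : ∀ x ∈ Icc (-1 : ℝ) 1, 0 < (f x ^ 2 + ε) ^ (p / 2) := fun x hx =>
    rpow_pos_of_pos (hpos x hx) _
  refine (mul_integral_rpow_sq_le_of_pos hD hp hα hκ
    (fun x hx => hasDerivWithinAt_rpow (hsq x hx) (hpos x hx)) hgc'
    (fun x hx => by rw [heven x hx]) hgpos).trans (integral_mono_ae ?_ ?_ ?_)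
  · exact integrable_of_continuousOn hD ((continuousOn_energyDensity κ (1 / p)).comp
      (hgc.prodMk (hgc'.prodMk continuousOn_id)) hgpos)
  · exact integrable_of_continuousOn hD (by fun_prop)
  · filter_upwards [ae_mem_Icc] with x hx
    rw [energyDensity_rpow (hpos x hx), show 1 / p * (p / 2) = 1 / 2 by field_simp]
    exact energyDensity_sq_add_le hx hε κ (f x) (f' x)

lemma mul_integral_abs_rpow_le (hD : 0 < D) (hp : 1 ≤ p)
    (hα : (p - 1) * (D - 1) ^ 2 ≤ D * (D + 2))
    (hκ : κ * (p - 2) = D + (1 - (p - 1) * (D - 1) ^ 2 / (D * (D + 2))) * (D + 2))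
    (hf : ∀ x ∈ Icc (-1 : ℝ) 1, HasDerivWithinAt f (f' x) (Icc (-1) 1) x)
    (hf' : ContinuousOn f' (Icc (-1) 1)) (heven : ∀ x ∈ Icc (-1 : ℝ) 1, f (-x) = f x) :
    κ * (∫ x, |f x| ^ p ∂ultrasphericalMeasure D) ^ (2 / p)
      ≤ ∫ x, f' x ^ 2 * (1 - x ^ 2) ∂ultrasphericalMeasure D
        + κ * ∫ x, f x ^ 2 ∂ultrasphericalMeasure D := by
  have := isProbabilityMeasure_ultrasphericalMeasure hD
  have hfc : ContinuousOn f (Icc (-1) 1) := fun x hx => (hf x hx).continuousWithinAt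
  have continuous_in_ε : ∀ {F : ℝ → ℝ → ℝ},
      ContinuousOn (fun z : ℝ × ℝ => F z.1 z.2) (Icc 0 1 ×ˢ Icc (-1) 1) →
      ContinuousOn (fun ε => ∫ x, F ε x ∂ultrasphericalMeasure D) (closure (Ioo 0 1)) := by
    intro F hF
    rw [closure_Ioo zero_ne_one]
    exact continuousOn_integral_of_ae_mem isCompact_Icc ae_mem_Icc isCompact_Icc hF
  have cf := hfc.comp continuousOn_snd (fun z hz => hz.2 : MapsTo Prod.snd (Icc (0 : ℝ) 1 ×ˢ _) _)
  have cf' := hf'.comp continuousOn_snd (fun z hz => hz.2 : MapsTo Prod.snd (Icc (0 : ℝ) 1 ×ˢ _) _)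
  have regularized := le_on_closure (s := Ioo (0 : ℝ) 1) (x := 0)
    (fun ε hε => mul_integral_sq_add_rpow_le hD hp hα hκ hf hf' heven hε.1)
    ((((continuous_in_ε (((cf.pow 2).add continuousOn_fst).rpow_const fun _ _ =>
      Or.inr (by positivity))).rpow_const fun _ _ => Or.inr (by positivity)).pow 2).const_mul κ)
    (continuous_in_ε (((continuousOn_const.sub (continuousOn_snd.pow 2)).mul (cf'.pow 2)).add
      (((cf.pow 2).add continuousOn_fst).const_mul κ)))
    (by rw [closure_Ioo zero_ne_one]; exact left_mem_Icc.2 zero_le_one)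
  have abs_rpow : ∀ x, (f x ^ 2) ^ (p / 2) = |f x| ^ p := fun x => by
    rw [← sq_abs, ← rpow_natCast_mul (abs_nonneg _), Nat.cast_two,
      mul_div_cancel₀ p two_ne_zero]
  have hnonneg : 0 ≤ ∫ x, |f x| ^ p ∂ultrasphericalMeasure D :=
    integral_nonneg fun x => rpow_nonneg (abs_nonneg _) _
  simp only [add_zero, abs_rpow] at regularized
  rw [← rpow_mul_natCast hnonneg, Nat.cast_two, one_div_mul_eq_div, integral_add
    (integrable_of_continuousOn hD (by fun_prop)) (integrable_of_continuousOn hD (by fun_prop)),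
    integral_const_mul] at regularized
  simpa only [mul_comm] using regularized

end Regularization

end Ultraspherical

theorem ultraspherical_improved_symmetric_general (D : ℝ) (hD : 0 < D) (p : ℝ) (hp : 1 ≤ p)
    (hp2 : p ≠ 2) (hα : (p - 1) * (D - 1) ^ 2 ≤ D * (D + 2)) (f : ℝ → ℝ)
    (hf : ContDiffOn ℝ 1 f (Set.Icc (-1 : ℝ) 1))
    (hsym : ∀ x ∈ Set.Icc (-1 : ℝ) 1, f (-x) = f x) :
    ∫ x, (deriv f x) ^ 2 * (1 - x ^ 2) ∂(Ultraspherical.ultrasphericalMeasure D) ≥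
      (D + (1 - (p - 1) * (D - 1) ^ 2 / (D * (D + 2))) * (D + 2)) *
        (((∫ x, |f x| ^ p ∂(Ultraspherical.ultrasphericalMeasure D)) ^ (2 / p) -
          ∫ x, |f x| ^ (2 : ℝ) ∂(Ultraspherical.ultrasphericalMeasure D)) / (p - 2)) := by
  have hderiv : ∀ x ∈ Set.Icc (-1 : ℝ) 1,
      HasDerivWithinAt f (derivWithin f (Set.Icc (-1) 1) x) (Set.Icc (-1) 1) x :=
    fun x hx => (hf.differentiableOn_one x hx).hasDerivWithinAt
  have hderivc : ContinuousOn (derivWithin f (Set.Icc (-1) 1)) (Set.Icc (-1) 1) :=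
    hf.continuousOn_derivWithin (uniqueDiffOn_Icc (by norm_num)) le_rfl
  have inequality := Ultraspherical.mul_integral_abs_rpow_le hD hp hα
    (div_mul_cancel₀ _ (sub_ne_zero.2 hp2)) hderiv hderivc hsym
  have deriv_eq : ∫ x, deriv f x ^ 2 * (1 - x ^ 2) ∂(Ultraspherical.ultrasphericalMeasure D)
      = ∫ x, derivWithin f (Set.Icc (-1) 1) x ^ 2 * (1 - x ^ 2)
        ∂(Ultraspherical.ultrasphericalMeasure D) :=
    integral_congr_ae (Ultraspherical.ae_mem_Ioo.mono fun x hx => by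
      simp only [derivWithin_of_mem_nhds (Icc_mem_nhds hx.1 hx.2)])
  simp only [rpow_two, sq_abs]
  rw [ge_iff_le, deriv_eq, mul_div_left_comm, ← mul_comm, mul_sub]
  exact sub_le_iff_le_add.2 inequality

theorem ultraspherical_improved_symmetric (d : ℕ) (hd : 2 ≤ d) (p : ℝ) (hp1 : 2 < p)
    (hp2 : p < (2 * (d : ℝ) ^ 2 + 1) / ((d : ℝ) - 1) ^ 2)
    (f : ℝ → ℝ) (hf : ContDiffOn ℝ 1 f (Set.Icc (-1 : ℝ) 1))
    (hsym : ∀ x ∈ Set.Icc (-1 : ℝ) 1, f (-x) = f x) :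
    ∫ x, (deriv f x) ^ 2 * (1 - x ^ 2) ∂(nuMeas d) ≥
      ((d : ℝ) + (1 - (p - 1) * ((d : ℝ) - 1) ^ 2 / ((d : ℝ) * ((d : ℝ) + 2))) * ((d : ℝ) + 2)) *
        (((∫ x, |f x| ^ p ∂(nuMeas d)) ^ (2 / p) -
          ∫ x, |f x| ^ (2 : ℝ) ∂(nuMeas d)) / (p - 2)) := by
  have hd' : (2 : ℝ) ≤ d := Nat.ofNat_le_cast.2 hd
  rw [lt_div_iff₀ (by nlinarith)] at hp2
  exact ultraspherical_improved_symmetric_general d (by linarith) p (by linarith) hp1.ne'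
    (by linarith) f hf hsym
end
end
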